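/- Let x ∈ A_N (N ≥ 3) have 2k cycles of even length. The Hurwitz action of the braid group B_{ℓ_3(x)} on the set Red_3(x) of minimal factorizations of x into 3-cycles has exactly (k+1)(k+2)···(2k) orbits. In particular, the action is transitive if and only if all cycles of x have odd length. -/

import Mathlib

open Equiv Equiv.Perm

/-- The word length of `x` with respect to a generating set `T`. -/
noncomputable def lenT {G : Type*} [Group G] (T : Set G) (x : G) : ℕ :=
  sInf {n | ∃ l : List G, (∀ t ∈ l, t ∈ T) ∧ l.prod = x ∧ l.length = n}

/-- The `T`-prefix order. -/
def leT {G : Type*} [Group G] (T : Set G) (x y : G) : Prop :=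
  lenT T y = lenT T x + lenT T (x⁻¹ * y)

/-- The set of 3-cycles of the symmetric group on `Fin N`. -/
def threeCycles (N : ℕ) : Set (Perm (Fin N)) := {σ | σ.IsThreeCycle}

/-- The set of transpositions of the symmetric group on `Fin N`. -/
def transpositions (N : ℕ) : Set (Perm (Fin N)) := {σ | σ.IsSwap}

/-- The number of odd cycles of a permutation, counting fixed points. -/
def ocyc {N : ℕ} (x : Perm (Fin N)) : ℕ :=
  (x.cycleType.filter (fun n => Odd n)).card + (N - x.cycleType.sum)

/-- An elementary Hurwitz move (the action of a braid generator `σ_i`):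
`(…, t, u, …) ↦ (…, u, u⁻¹tu, …)`.  Orbits of the braid-group (Hurwitz) action are
exactly the equivalence classes of the equivalence relation generated by this move. -/
def HurwitzMove {G : Type*} [Group G] (w w' : List G) : Prop :=
  ∃ l₁ l₂ : List G, ∃ t u : G,
    w = l₁ ++ t :: u :: l₂ ∧ w' = l₁ ++ u :: (u⁻¹ * t * u) :: l₂


namespace H19
set_option linter.unusedSectionVars false

section Classes
variable {α : Type*} [Fintype α] [DecidableEq α]

/-- The cycle (as a set of points) of `x` through `p`. -/
def cls (x : Perm α) (p : α) : Finset α := Finset.univ.filter (fun q => x.SameCycle p q)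

/-- The set of all odd cycles (fixed points included). -/
def OC (x : Perm α) : Finset (Finset α) := (Finset.univ.image (cls x)).filter (fun C => Odd C.card)

/-- The set of all even cycles. -/
def EC (x : Perm α) : Finset (Finset α) := (Finset.univ.image (cls x)).filter (fun C => Even C.card)

/-- The number of odd cycles. -/
def oc (x : Perm α) : ℕ := (OC x).card

theorem mem_cls {x : Perm α} {p q : α} : q ∈ cls x p ↔ x.SameCycle p q := by simp [cls]

theorem self_mem_cls (x : Perm α) (p : α) : p ∈ cls x p := mem_cls.2 (SameCycle.refl _ _)

theorem cls_eq_iff {x : Perm α} {p q : α} : cls x p = cls x q ↔ x.SameCycle p q := by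
  constructor
  · intro h
    exact mem_cls.1 (h ▸ self_mem_cls x q)
  · intro h
    ext r
    simp only [mem_cls]
    exact ⟨fun h' => h.symm.trans h', fun h' => h.trans h'⟩

theorem cls_disj {x : Perm α} {p q : α} (h : ¬ x.SameCycle p q) : Disjoint (cls x p) (cls x q) := by
  rw [Finset.disjoint_left]
  intro r hp hq
  exact h ((mem_cls.1 hp).trans (mem_cls.1 hq).symm)

theorem cls_card_pos (x : Perm α) (p : α) : 0 < (cls x p).card :=
  Finset.card_pos.2 ⟨p, self_mem_cls x p⟩

theorem cls_fixed {x : Perm α} {p : α} (h : x p = p) : cls x p = {p} := by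
  ext q
  simp only [mem_cls, Finset.mem_singleton]
  constructor
  · intro h'
    exact (h'.eq_of_left h).symm
  · rintro rfl
    exact SameCycle.refl _ _

theorem mem_OC {x : Perm α} {C : Finset α} : C ∈ OC x ↔ Odd C.card ∧ ∃ p, cls x p = C := by
  simp [OC, and_comm]

theorem mem_EC {x : Perm α} {C : Finset α} : C ∈ EC x ↔ Even C.card ∧ ∃ p, cls x p = C := by
  simp [EC, and_comm]

/-- A set closed under `z` contains the cycle. -/
theorem same_closed {z : Perm α} {s : Set α} (hs : ∀ q ∈ s, z q ∈ s) {p q : α} (hp : p ∈ s)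
    (h : z.SameCycle p q) : q ∈ s := by
  obtain ⟨n, rfl⟩ := h.exists_nat_pow_eq
  clear h
  induction n with
  | zero => simpa
  | succ n ih => rw [pow_succ']; exact hs _ ih

theorem same_of_step {y z : Perm α} (h : ∀ p, z.SameCycle p (y p)) {p q : α}
    (hpq : y.SameCycle p q) : z.SameCycle p q := by
  refine same_closed (z := y) (s := {q | z.SameCycle p q}) ?_ (SameCycle.refl _ _) hpq
  intro q hq
  exact SameCycle.trans hq (h q)

theorem merge_aux {y : Perm α} {a b : α} (h : ¬ y.SameCycle a b) (n : ℕ) :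
    (swap a b * y).SameCycle a ((y ^ n) a) := by
  induction n with
  | zero => exact SameCycle.refl _ _
  | succ n ih =>
    by_cases h1 : (y ^ (n+1)) a = a
    · rw [h1]
    · have h2 : (y ^ (n+1)) a ≠ b := by
        intro hb
        exact h ⟨(n+1 : ℕ), by rw [zpow_natCast]; exact hb⟩
      have : (swap a b * y) ((y^n) a) = (y^(n+1)) a := by
        rw [pow_succ'] at h1 h2 ⊢
        simp only [Perm.mul_apply] at *
        exact swap_apply_of_ne_of_ne h1 h2
      rw [← this, sameCycle_apply_right]
      exact ih

theorem merge_step {y : Perm α} {a b : α} (h : ¬ y.SameCycle a b) (p : α) :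
    (swap a b * y).SameCycle p (y p) := by
  by_cases h1 : y p = a
  · obtain ⟨n, hn⟩ := (show y.SameCycle a p by
      rw [← h1]; exact (sameCycle_apply_left.2 (SameCycle.refl _ _))).exists_nat_pow_eq
    rw [h1]
    have := merge_aux h n
    rw [hn] at this
    exact this.symm
  by_cases h2 : y p = b
  · have h' : ¬ y.SameCycle b a := fun h' => h h'.symm
    obtain ⟨n, hn⟩ := (show y.SameCycle b p by
      rw [← h2]; exact (sameCycle_apply_left.2 (SameCycle.refl _ _))).exists_nat_pow_eq
    rw [h2]
    have := merge_aux h' n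
    rw [hn, swap_comm] at this
    exact this.symm
  · have : (swap a b * y) p = y p := by
      simp only [Perm.mul_apply]
      exact swap_apply_of_ne_of_ne h1 h2
    rw [← this]
    exact sameCycle_apply_right.2 (SameCycle.refl _ _)

theorem merge_ab {y : Perm α} {a b : α} (h : ¬ y.SameCycle a b) :
    (swap a b * y).SameCycle a b := by
  have h1 := merge_step h (y⁻¹ a)
  have h2 : (swap a b * y) (y⁻¹ a) = b := by simp
  have h3 : (swap a b * y).SameCycle (y⁻¹ a) b := by
    have := (sameCycle_apply_right (f := swap a b * y)).2 (SameCycle.refl _ (y⁻¹ a))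
    rwa [h2] at this
  rw [show y (y⁻¹ a) = a by simp] at h1
  exact h1.symm.trans h3

theorem merge_same {y : Perm α} {a b : α} (h : ¬ y.SameCycle a b) {p q : α} :
    (swap a b * y).SameCycle p q ↔
      y.SameCycle p q ∨ ((y.SameCycle a p ∨ y.SameCycle b p) ∧ (y.SameCycle a q ∨ y.SameCycle b q)) := by
  constructor
  · intro hpq
    refine same_closed (z := swap a b * y) (s := {q | y.SameCycle p q ∨
      ((y.SameCycle a p ∨ y.SameCycle b p) ∧ (y.SameCycle a q ∨ y.SameCycle b q))}) ?_
      (Or.inl (SameCycle.refl _ _)) hpq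
    intro r hr
    simp only [Set.mem_ofPred_eq, Perm.mul_apply] at hr ⊢
    by_cases h1 : y r = a
    · rw [h1, swap_apply_left]
      have : y.SameCycle a r := by rw [← h1]; exact sameCycle_apply_left.2 (SameCycle.refl _ _)
      right
      refine ⟨?_, Or.inr (SameCycle.refl _ _)⟩
      rcases hr with hr | hr
      · exact Or.inl (this.trans hr.symm)
      · exact hr.1
    by_cases h2 : y r = b
    · rw [h2, swap_apply_right]
      have : y.SameCycle b r := by rw [← h2]; exact sameCycle_apply_left.2 (SameCycle.refl _ _)
      right
      refine ⟨?_, Or.inl (SameCycle.refl _ _)⟩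
      rcases hr with hr | hr
      · exact Or.inr (this.trans hr.symm)
      · exact hr.1
    rw [swap_apply_of_ne_of_ne h1 h2]
    simpa only [sameCycle_apply_right] using hr
  · have hh : ∀ {p q}, y.SameCycle p q → (swap a b * y).SameCycle p q :=
      fun h' => same_of_step (merge_step h) h'
    have hab := merge_ab h
    rintro (h1 | ⟨h1 | h1, h2 | h2⟩)
    · exact hh h1
    · exact hh (h1.symm.trans h2)
    · exact (hh h1).symm.trans (hab.trans (hh h2))
    · exact (hh h1).symm.trans (hab.symm.trans (hh h2))
    · exact hh (h1.symm.trans h2)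

theorem split_not {x : Perm α} {a b : α} (hab : a ≠ b) (h : x.SameCycle a b) :
    ¬ (swap a b * x).SameCycle a b := by
  intro h'
  have hex := h.exists_nat_pow_eq
  classical
  set n := Nat.find hex with hn
  have hn1 : (x ^ n) a = b := Nat.find_spec hex
  have hmin : ∀ m < n, (x ^ m) a ≠ b := fun m hm => Nat.find_min hex hm
  have hn0 : n ≠ 0 := by
    intro h0
    rw [h0] at hn1
    exact hab (by simpa using hn1)
  have hb : b ∈ {q | ∃ i < n, (x ^ i) a = q} := by
    refine same_closed (z := swap a b * x) ?_ ⟨0, by omega, by simp⟩ h'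
    rintro q ⟨i, hi, rfl⟩
    simp only [Set.mem_ofPred_eq, Perm.mul_apply]
    have e : x ((x ^ i) a) = (x ^ (i+1)) a := by rw [pow_succ']; rfl
    rw [e]
    by_cases hin : i + 1 = n
    · rw [hin, hn1, swap_apply_right]
      exact ⟨0, by omega, by simp⟩
    · have h1 : (x ^ (i+1)) a ≠ b := hmin _ (by omega)
      have h2 : (x ^ (i+1)) a ≠ a := by
        intro h2
        apply hmin (n - (i+1)) (by omega)
        rw [← hn1]
        conv_rhs => rw [show n = (n - (i+1)) + (i+1) by omega, pow_add, Perm.mul_apply, h2]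
      rw [swap_apply_of_ne_of_ne h2 h1]
      exact ⟨i+1, by omega, rfl⟩
  obtain ⟨i, hi, h2⟩ := hb
  exact hmin i hi h2

/-- Merging, on classes. -/
theorem cls_merge {y : Perm α} {a b : α} (h : ¬ y.SameCycle a b) :
    cls (swap a b * y) a = cls y a ∪ cls y b := by
  ext q
  simp only [mem_cls, Finset.mem_union, merge_same h]
  have := SameCycle.refl y a
  tauto

theorem cls_merge_other {y : Perm α} {a b p : α} (h : ¬ y.SameCycle a b) (h1 : ¬ y.SameCycle a p)
    (h2 : ¬ y.SameCycle b p) : cls (swap a b * y) p = cls y p := by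
  ext q
  simp only [mem_cls, merge_same h]
  tauto

theorem card_merge {y : Perm α} {a b : α} (h : ¬ y.SameCycle a b) :
    (cls (swap a b * y) a).card = (cls y a).card + (cls y b).card := by
  rw [cls_merge h, Finset.card_union_of_disjoint (cls_disj h)]

theorem oc_merge {y : Perm α} {a b : α} (h : ¬ y.SameCycle a b) :
    oc (swap a b * y) + (if Odd (cls y a).card ∧ Odd (cls y b).card then 2 else 0) = oc y := by
  set z := swap a b * y with hz
  have hU : cls z a = cls y a ∪ cls y b := cls_merge h
  have hc : (cls z a).card = (cls y a).card + (cls y b).card := card_merge h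
  have hab : cls y a ≠ cls y b := fun e => h (cls_eq_iff.1 e)
  have hzab : z.SameCycle a b := merge_ab h
  -- membership
  have key : ∀ C, C ∈ OC z ↔ (C ∈ OC y ∧ C ≠ cls y a ∧ C ≠ cls y b) ∨
      (C = cls z a ∧ Odd (cls z a).card) := by
    intro C
    simp only [mem_OC]
    constructor
    · rintro ⟨ho, p, rfl⟩
      by_cases hp : z.SameCycle a p
      · right
        have := cls_eq_iff.2 hp
        exact ⟨this.symm, this ▸ ho⟩
      · left
        have h1 : ¬ y.SameCycle a p := fun h' => hp ((merge_same h).2 (Or.inl h'))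
        have h2 : ¬ y.SameCycle b p := fun h' => hp (hzab.trans ((merge_same h).2 (Or.inl h')))
        have := cls_merge_other h h1 h2
        rw [← hz] at this
        rw [this] at ho ⊢
        exact ⟨⟨ho, p, rfl⟩, fun e => h1 (cls_eq_iff.1 e).symm, fun e => h2 (cls_eq_iff.1 e).symm⟩
    · rintro (⟨⟨ho, p, rfl⟩, h1, h2⟩ | ⟨rfl, ho⟩)
      · refine ⟨ho, p, ?_⟩
        exact cls_merge_other h (fun e => h1 (cls_eq_iff.2 e.symm)) (fun e => h2 (cls_eq_iff.2 e.symm))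
      · exact ⟨ho, a, rfl⟩
  have hnot : cls z a ∉ OC y := by
    rw [mem_OC]
    rintro ⟨-, p, hp⟩
    have h1 : a ∈ cls y p := by rw [hp]; exact self_mem_cls _ _
    have h2 : b ∈ cls y p := by rw [hp]; exact mem_cls.2 hzab
    exact h ((mem_cls.1 h1).symm.trans (mem_cls.1 h2))
  unfold oc
  by_cases oa : Odd (cls y a).card <;> by_cases ob : Odd (cls y b).card
  · have : OC z = ((OC y).erase (cls y a)).erase (cls y b) := by
      ext C
      rw [key]
      have : ¬ Odd (cls z a).card := by rw [hc]; exact Nat.not_odd_iff_even.2 (oa.add_odd ob)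
      simp only [Finset.mem_erase]
      tauto
    rw [this, Finset.card_erase_of_mem, Finset.card_erase_of_mem]
    · have m1 : cls y a ∈ OC y := mem_OC.2 ⟨oa, a, rfl⟩
      have m2 : cls y b ∈ OC y := mem_OC.2 ⟨ob, b, rfl⟩
      have : 1 < (OC y).card := Finset.one_lt_card.2 ⟨_, m1, _, m2, hab⟩
      simp [oa, ob]
      omega
    · exact mem_OC.2 ⟨oa, a, rfl⟩
    · exact Finset.mem_erase.2 ⟨hab.symm, mem_OC.2 ⟨ob, b, rfl⟩⟩
  · have : OC z = insert (cls z a) ((OC y).erase (cls y a)) := by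
      ext C
      rw [key]
      have h3 : Odd (cls z a).card := by
        rw [hc]; exact oa.add_even (Nat.not_odd_iff_even.1 ob)
      have h4 : C = cls y b → C ∉ OC y := by
        rintro rfl h5
        exact ob (mem_OC.1 h5).1
      simp only [Finset.mem_erase, Finset.mem_insert]
      tauto
    have m1 : cls y a ∈ OC y := mem_OC.2 ⟨oa, a, rfl⟩
    rw [this, Finset.card_insert_of_notMem (fun h' => hnot (Finset.mem_of_mem_erase h')),
      Finset.card_erase_of_mem m1]
    have := Finset.card_pos.2 ⟨_, m1⟩
    simp [ob]
    omega
  · have : OC z = insert (cls z a) ((OC y).erase (cls y b)) := by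
      ext C
      rw [key]
      have h3 : Odd (cls z a).card := by
        rw [hc]; exact (Nat.not_odd_iff_even.1 oa).add_odd ob
      have h4 : C = cls y a → C ∉ OC y := by
        rintro rfl h5
        exact oa (mem_OC.1 h5).1
      simp only [Finset.mem_erase, Finset.mem_insert]
      tauto
    have m1 : cls y b ∈ OC y := mem_OC.2 ⟨ob, b, rfl⟩
    rw [this, Finset.card_insert_of_notMem (fun h' => hnot (Finset.mem_of_mem_erase h')),
      Finset.card_erase_of_mem m1]
    have := Finset.card_pos.2 ⟨_, m1⟩
    simp [oa]
    omega
  · have : OC z = OC y := by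
      ext C
      rw [key]
      have h3 : ¬ Odd (cls z a).card := by
        rw [hc, Nat.not_odd_iff_even]
        exact (Nat.not_odd_iff_even.1 oa).add (Nat.not_odd_iff_even.1 ob)
      have h4 : C = cls y b → C ∉ OC y := by
        rintro rfl h5
        exact ob (mem_OC.1 h5).1
      have h5 : C = cls y a → C ∉ OC y := by
        rintro rfl h5
        exact oa (mem_OC.1 h5).1
      tauto
    rw [this]
    simp [oa]

end Classes
end H19


namespace H19
set_option linter.unusedSectionVars false

section Struct
variable {α : Type*} [Fintype α] [DecidableEq α]

/-- The 3-cycle `a → b → c → a`. -/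
def c3 (a b c : α) : Perm α := swap a b * swap b c

/-- pairwise distinct -/
def D3 (a b c : α) : Prop := a ≠ b ∧ b ≠ c ∧ a ≠ c

theorem D3.rot {a b c : α} (h : D3 a b c) : D3 b c a := ⟨h.2.1, h.2.2.symm, h.1.symm⟩

theorem c3_1 {a b c : α} (h : D3 a b c) : c3 a b c a = b := by
  simp [c3, swap_apply_of_ne_of_ne h.1 h.2.2]
theorem c3_2 {a b c : α} (h : D3 a b c) : c3 a b c b = c := by
  simp [c3, swap_apply_of_ne_of_ne h.2.2.symm h.2.1.symm]
theorem c3_3 {a b c : α} : c3 a b c c = a := by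
  simp [c3]
theorem c3_ne {a b c p : α} (h1 : p ≠ a) (h2 : p ≠ b) (h3 : p ≠ c) : c3 a b c p = p := by
  simp [c3, swap_apply_of_ne_of_ne h2 h3, swap_apply_of_ne_of_ne h1 h2]

theorem c3_rot {a b c : α} (h : D3 a b c) : c3 a b c = c3 b c a := by
  ext p
  by_cases h1 : p = a
  · subst h1; rw [c3_1 h, c3_3]
  by_cases h2 : p = b
  · subst h2; rw [c3_2 h, c3_1 h.rot]
  by_cases h3 : p = c
  · subst h3; rw [c3_3, c3_2 h.rot]
  rw [c3_ne h1 h2 h3, c3_ne h2 h3 h1]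

theorem c3_inv (a b c : α) : (c3 a b c)⁻¹ = swap b c * swap a b := by
  simp [c3]

theorem c3i_1 {a b c : α} (h : D3 a b c) : (c3 a b c)⁻¹ b = a := by
  rw [Perm.inv_eq_iff_eq, c3_1 h]
theorem c3i_2 {a b c : α} (h : D3 a b c) : (c3 a b c)⁻¹ c = b := by
  rw [Perm.inv_eq_iff_eq, c3_2 h]
theorem c3i_3 {a b c : α} : (c3 a b c)⁻¹ a = c := by
  rw [Perm.inv_eq_iff_eq, c3_3]
theorem c3i_ne {a b c p : α} (h1 : p ≠ a) (h2 : p ≠ b) (h3 : p ≠ c) : (c3 a b c)⁻¹ p = p := by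
  rw [Perm.inv_eq_iff_eq, c3_ne h1 h2 h3]

theorem c3_conj (g : Perm α) (a b c : α) : g * c3 a b c * g⁻¹ = c3 (g a) (g b) (g c) := by
  have : ∀ a b : α, swap (g a) (g b) = g * swap a b * g⁻¹ := fun a b => by
    rw [mul_swap_eq_swap_mul]; simp
  simp only [c3, this]
  group

theorem c3_three {a b c : α} (h : D3 a b c) : (c3 a b c).IsThreeCycle := by
  unfold c3
  rw [swap_comm a b]
  exact isThreeCycle_swap_mul_swap_same h.1.symm h.2.1 h.2.2

theorem three_c3 {t : Perm α} (h : t.IsThreeCycle) : ∃ a b c, D3 a b c ∧ t = c3 a b c := by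
  have h1 := h.ne_one
  obtain ⟨a, ha⟩ : ∃ a, t a ≠ a := by
    by_contra! h2
    exact h1 (Perm.ext h2)
  have h3 : t ^ 3 = 1 := by rw [← h.orderOf]; exact pow_orderOf_eq_one t
  have h3' : ∀ q, t (t (t q)) = q := by
    intro q
    have := congrArg (fun g : Perm α => g q) h3
    simpa [pow_succ] using this
  have hd : D3 a (t a) (t (t a)) := by
    refine ⟨ha.symm, fun h => ha (t.injective h).symm, fun h => ?_⟩
    have := h3' a
    rw [← h] at this
    exact ha this
  refine ⟨a, t a, t (t a), hd, ?_⟩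
  have hsub : ({a, t a, t (t a)} : Finset α) ⊆ t.support := by
    intro q hq
    simp only [Finset.mem_insert, Finset.mem_singleton] at hq
    rw [mem_support]
    rcases hq with rfl | rfl | rfl
    · exact ha
    · exact hd.2.1.symm
    · rw [h3']; exact hd.2.2
  have hs : t.support = {a, t a, t (t a)} := by
    refine (Finset.eq_of_subset_of_card_le hsub ?_).symm
    rw [h.card_support, Finset.card_insert_of_notMem, Finset.card_insert_of_notMem,
      Finset.card_singleton]
    · simpa using hd.2.1
    · simpa using ⟨hd.1, hd.2.2⟩
  ext q
  by_cases h1 : q = a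
  · subst h1; rw [c3_1 hd]
  by_cases h2 : q = t a
  · rw [h2, c3_2 hd]
  by_cases h4 : q = t (t a)
  · rw [h4, c3_3, h3']
  rw [c3_ne h1 h2 h4]
  have : q ∉ t.support := by rw [hs]; simp [h1, h2, h4]
  simpa using this

theorem same_app (x : Perm α) (p : α) : x.SameCycle p (x p) :=
  sameCycle_apply_right.2 (SameCycle.refl _ _)

/-- Three points in the order `a, b` in one cycle and `c` in another. -/
theorem L3 {x y : Perm α} {a b c : α} (hd : D3 a b c) (hxy : x = c3 a b c * y)
    (hab : x.SameCycle a b) (hac : ¬ x.SameCycle a c) :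
    oc y ≤ oc x + 2 ∧ (oc y = oc x + 2 → Odd (cls y a).card ∧ Odd (cls y b).card ∧
      ¬ y.SameCycle a b ∧ ¬ y.SameCycle a c ∧ y.SameCycle b c ∧ Even (cls x a).card ∧
      Even (cls x c).card) := by
  obtain ⟨z, hz⟩ : ∃ z, z = swap a b * x := ⟨_, rfl⟩
  have hy : y = swap b c * z := by
    rw [hz, hxy, c3]; simp [← mul_assoc]
  have hx : x = swap a b * z := by rw [hz]; simp [← mul_assoc]
  have zab : ¬ z.SameCycle a b := by rw [hz]; exact split_not hd.1 hab
  have e1 := oc_merge zab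
  have e2 := cls_merge zab
  have e3 := card_merge zab
  rw [← hx] at e1 e2 e3
  have zac : ¬ z.SameCycle a c := by
    intro h; exact hac (by rw [hx]; exact (merge_same zab).2 (Or.inl h))
  have zbc : ¬ z.SameCycle b c := by
    intro h; exact hac (by
      rw [hx]; exact (merge_same zab).2 (Or.inr ⟨Or.inl (SameCycle.refl _ _), Or.inr h⟩))
  have f1 := oc_merge zbc
  have f3 := card_merge zbc
  have f4 : cls y a = cls z a := by
    rw [hy]; exact cls_merge_other zbc (fun h => zab h.symm) (fun h => zac h.symm)
  have e4 : cls x c = cls z c := by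
    rw [hx]; exact cls_merge_other zab zac zbc
  rw [← hy] at f1 f3
  have yab : ¬ y.SameCycle a b := by
    rw [hy, merge_same zbc]
    have : ¬ z.SameCycle b a := fun h => zab h.symm
    have : ¬ z.SameCycle c a := fun h => zac h.symm
    tauto
  have ybc : y.SameCycle b c := by rw [hy]; exact merge_ab zbc
  refine ⟨by split_ifs at e1 f1 <;> omega, fun h => ?_⟩
  have k1 : Odd (cls z a).card ∧ Odd (cls z b).card := by
    by_contra h'
    rw [if_neg h'] at e1
    omega
  have k2 : ¬ Odd (cls z c).card := by
    intro h'
    rw [if_pos ⟨k1.2, h'⟩] at f1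
    split_ifs at e1 <;> omega
  rw [Nat.not_odd_iff_even] at k2
  rw [f4, f3, e3, e4]
  exact ⟨k1.1, k1.2.add_even k2, yab, fun h => yab (h.trans ybc.symm), ybc, k1.1.add_odd k1.2, k2⟩

/-- Three points in the same cycle. -/
theorem L12 {x y : Perm α} {a b c : α} (hd : D3 a b c) (hxy : x = c3 a b c * y)
    (hab : x.SameCycle a b) (hac : x.SameCycle a c) :
    oc y ≤ oc x + 2 ∧ (oc y = oc x + 2 → 
      ¬ y.SameCycle a b ∧ ¬ y.SameCycle a c ∧ ¬ y.SameCycle b c ∧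
      (∀ q, x.SameCycle a q ↔ y.SameCycle a q ∨ y.SameCycle b q ∨ y.SameCycle c q) ∧
      (cls x a).card = (cls y a).card + (cls y b).card + (cls y c).card ∧
      ((Odd (cls y a).card ∧ Odd (cls y b).card) ∨ (Odd (cls y b).card ∧ Odd (cls y c).card) ∨
        (Odd (cls y c).card ∧ Odd (cls y a).card))) := by
  obtain ⟨z, hz⟩ : ∃ z, z = swap a b * x := ⟨_, rfl⟩
  have hy : y = swap b c * z := by
    rw [hz, hxy, c3]; simp [← mul_assoc]
  have hx : x = swap a b * z := by rw [hz]; simp [← mul_assoc]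
  have hz' : z = swap b c * y := by rw [hy]; simp [← mul_assoc]
  have zab : ¬ z.SameCycle a b := by rw [hz]; exact split_not hd.1 hab
  have e1 := oc_merge zab
  have e3 := card_merge zab
  have e5 : ∀ q, x.SameCycle a q ↔ z.SameCycle a q ∨ z.SameCycle b q := by
    intro q; rw [hx, merge_same zab]
    have := SameCycle.refl z a
    tauto
  rw [← hx] at e1 e3
  rcases (e5 c).1 hac with zac | zbc
  · -- merges back
    have zbc : ¬ z.SameCycle b c := fun h => zab (zac.trans h.symm)
    have f1 := oc_merge zbc
    rw [← hy, ← cls_eq_iff.2 zac] at f1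
    simp only [and_comm] at e1 f1
    have : oc y = oc x := by omega
    exact ⟨by omega, fun h => by omega⟩
  · have ybc : ¬ y.SameCycle b c := by rw [hy]; exact split_not hd.2.1 zbc
    have f1 := oc_merge ybc
    have f3 := card_merge ybc
    have f4 : ∀ {p q}, z.SameCycle p q ↔ _ := fun {p q} => by rw [hz', merge_same ybc]
    rw [← hz'] at f1 f3
    have yab : ¬ y.SameCycle a b := fun h => zab (f4.2 (Or.inl h))
    have yac : ¬ y.SameCycle a c := fun h => zab (f4.2 (Or.inr ⟨Or.inr h.symm, Or.inl (SameCycle.refl _ _)⟩))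
    have f5 : cls z a = cls y a := by
      rw [hz']; exact cls_merge_other ybc (fun h => yab h.symm) (fun h => yac h.symm)
    refine ⟨?_, fun h => ⟨yab, yac, ybc, ?_, ?_, ?_⟩⟩
    · split_ifs at e1 f1 with g1 g2 <;> try omega
      exact absurd (f3 ▸ g2.1.add_odd g2.2) (Nat.not_even_iff_odd.2 g1.2)
    · intro q
      rw [e5, ← mem_cls, f5, mem_cls, f4]
      have := SameCycle.refl y b
      tauto
    · rw [e3, f5, f3]; ring
    · rw [f5, f3] at e1
      split_ifs at e1 f1 with g1 g2 <;> try omega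
      · have := g1.2
        rw [Nat.odd_add] at this
        by_cases hb : Odd (cls y b).card
        · exact Or.inl ⟨g1.1, hb⟩
        · right; right
          refine ⟨?_, g1.1⟩
          by_contra hcc
          exact hb (this.2 (Nat.not_odd_iff_even.1 hcc))
      · rename_i g2
        exact Or.inr (Or.inl g2)

theorem L0 {x y : Perm α} {a b c : α} (hd : D3 a b c) (hxy : x = c3 a b c * y)
    (hab : ¬ x.SameCycle a b) (hac : ¬ x.SameCycle a c) (hbc : ¬ x.SameCycle b c) :
    oc y ≤ oc x := by
  obtain ⟨z, hz⟩ : ∃ z, z = swap a b * x := ⟨_, rfl⟩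
  have hy : y = swap b c * z := by
    rw [hz, hxy, c3]; simp [← mul_assoc]
  have e1 := oc_merge hab
  have zbc : ¬ z.SameCycle b c := by
    rw [hz, merge_same hab]; tauto
  have f1 := oc_merge zbc
  rw [← hz] at e1
  rw [← hy] at f1
  omega

/-- Structure theorem for a factor `t` of `x`, up to rotation. -/
theorem struct_thm {x y t : Perm α} (ht : t.IsThreeCycle) (hxy : x = t * y) :
    oc y ≤ oc x + 2 ∧ (oc y = oc x + 2 → ∃ a b c, D3 a b c ∧ t = c3 a b c ∧ x.SameCycle a b) := by
  obtain ⟨a, b, c, hd, rfl⟩ := three_c3 ht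
  by_cases hab : x.SameCycle a b
  · by_cases hac : x.SameCycle a c
    · exact ⟨(L12 hd hxy hab hac).1, fun _ => ⟨a, b, c, hd, rfl, hab⟩⟩
    · exact ⟨(L3 hd hxy hab hac).1, fun _ => ⟨a, b, c, hd, rfl, hab⟩⟩
  by_cases hbc : x.SameCycle b c
  · have hba : ¬ x.SameCycle b a := fun h => hab h.symm
    exact ⟨(L3 hd.rot (by rw [← c3_rot hd]; exact hxy) hbc hba).1,
      fun _ => ⟨b, c, a, hd.rot, c3_rot hd, hbc⟩⟩
  by_cases hac : x.SameCycle a c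
  · exact ⟨(L3 hd.rot.rot (by rw [← c3_rot hd.rot, ← c3_rot hd]; exact hxy) hac.symm
        (fun h => hbc h.symm)).1,
      fun _ => ⟨c, a, b, hd.rot.rot, by rw [← c3_rot hd.rot, ← c3_rot hd], hac.symm⟩⟩
  have := L0 hd hxy hab hac hbc
  exact ⟨by omega, fun h => by omega⟩

theorem merge3_oc {x y : Perm α} {a b c : α} (hxy : x = c3 a b c * y)
    (hab : ¬ y.SameCycle a b) (hac : ¬ y.SameCycle a c) (hbc : ¬ y.SameCycle b c)
    (ob : Odd (cls y b).card) (oc' : Odd (cls y c).card) : oc y = oc x + 2 := by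
  obtain ⟨z, hz⟩ : ∃ z, z = swap b c * y := ⟨_, rfl⟩
  have hx : x = swap a b * z := by rw [hz, hxy, c3, mul_assoc]
  have e1 := oc_merge hbc
  have e3 := card_merge hbc
  have zab : ¬ z.SameCycle a b := by
    have : ¬ y.SameCycle b a := fun h => hab h.symm
    have : ¬ y.SameCycle c a := fun h => hac h.symm
    rw [hz, merge_same hbc]; tauto
  have f1 := oc_merge zab
  rw [← hz, if_pos ⟨ob, oc'⟩] at e1
  rw [← hz] at e3
  rw [← hx, e3, if_neg (fun h => Nat.not_odd_iff_even.2 (ob.add_odd oc') h.2)] at f1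
  omega

/-- If `x` and `y` agree on the cycle of `p`, cycles coincide. -/
theorem cls_congr {x y : Perm α} {p : α} (h : ∀ q, x.SameCycle p q → y q = x q) :
    cls y p = cls x p := by
  have h1 : ∀ n : ℕ, (y ^ n) p = (x ^ n) p := by
    intro n
    induction n with
    | zero => rfl
    | succ n ih => rw [pow_succ', pow_succ', Perm.mul_apply, Perm.mul_apply, ih, h]; exact ⟨n, by simp⟩
  ext q
  rw [mem_cls, mem_cls]
  constructor
  · intro h2
    obtain ⟨n, rfl⟩ := h2.exists_nat_pow_eq
    exact ⟨n, by rw [h1]; simp⟩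
  · intro h2
    obtain ⟨n, rfl⟩ := h2.exists_nat_pow_eq
    exact ⟨n, by rw [← h1]; simp⟩

/-- Untouched cycles. -/
theorem untouched {x y : Perm α} {a b c p : α} (hxy : x = c3 a b c * y)
    (ha : ¬ x.SameCycle p a) (hb : ¬ x.SameCycle p b) (hc : ¬ x.SameCycle p c) :
    (∀ q, x.SameCycle p q → y q = x q) ∧ cls y p = cls x p := by
  have : ∀ q, x.SameCycle p q → y q = x q := by
    intro q hq
    have h1 : x.SameCycle p (x q) := sameCycle_apply_right.2 hq
    have : y q = (c3 a b c)⁻¹ (x q) := by rw [hxy]; simp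
    rw [this, c3i_ne]
    · rintro h; exact ha (h ▸ h1)
    · rintro h; exact hb (h ▸ h1)
    · rintro h; exact hc (h ▸ h1)
  exact ⟨this, cls_congr this⟩

theorem odd2 {y : Perm α} {a : α} (ho : Odd (cls y a).card) (h : y (y a) = a) : y a = a := by
  by_contra hne
  have : cls y a = {a, y a} := by
    ext q
    rw [mem_cls]
    constructor
    · intro hq
      have : q ∈ ({a, y a} : Set α) := by
        refine same_closed (z := y) ?_ (by simp) hq
        rintro r (rfl | rfl)
        · simp
        · simp [h]
      simpa using this
    · intro hq
      simp only [Finset.mem_insert, Finset.mem_singleton] at hq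
      rcases hq with rfl | rfl
      · exact SameCycle.refl _ _
      · exact same_app _ _
  rw [this, Finset.card_pair (Ne.symm hne)] at ho
  exact absurd ho (by decide)

theorem even_ne {y : Perm α} {a : α} (ho : Even (cls y a).card) : y a ≠ a := by
  intro h
  rw [cls_fixed h, Finset.card_singleton] at ho
  exact absurd ho (by decide)

end Struct
end H19


namespace H19
set_option linter.unusedSectionVars false

section HE
variable {G : Type*} [Group G]

/-- Hurwitz equivalence of words. -/
def HE (w w' : List G) : Prop := Relation.EqvGen HurwitzMove w w'

theorem HE.refl (w : List G) : HE w w := Relation.EqvGen.refl w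
theorem HE.symm {w w' : List G} (h : HE w w') : HE w' w := Relation.EqvGen.symm _ _ h
theorem HE.trans {u v w : List G} (h : HE u v) (h' : HE v w) : HE u w :=
  Relation.EqvGen.trans _ _ _ h h'

theorem HE.lift {R : List G → List G → Prop} (h0 : ∀ w, R w w) (hs : ∀ u v, R u v → R v u)
    (ht : ∀ u v w, R u v → R v w → R u w)
    (hm : ∀ (l₁ l₂ : List G) (t u : G),
      R (l₁ ++ t :: u :: l₂) (l₁ ++ u :: (u⁻¹ * t * u) :: l₂)) {w w' : List G} (h : HE w w') :
    R w w' := by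
  induction h with
  | rel x y h => obtain ⟨l₁, l₂, t, u, rfl, rfl⟩ := h; exact hm _ _ _ _
  | refl x => exact h0 x
  | symm x y _ ih => exact hs _ _ ih
  | trans x y z _ _ h1 h2 => exact ht _ _ _ h1 h2

theorem HE.move (l₁ l₂ : List G) (t u : G) :
    HE (l₁ ++ t :: u :: l₂) (l₁ ++ u :: (u⁻¹ * t * u) :: l₂) :=
  Relation.EqvGen.rel _ _ ⟨l₁, l₂, t, u, rfl, rfl⟩

theorem HE.append {w w' : List G} (h : HE w w') (l r : List G) : HE (l ++ w ++ r) (l ++ w' ++ r) := by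
  refine HE.lift (R := fun w w' => HE (l ++ w ++ r) (l ++ w' ++ r)) (fun _ => HE.refl _)
    (fun _ _ h => h.symm) (fun _ _ _ h h' => h.trans h') ?_ h
  intro l₁ l₂ t u
  have := HE.move (l ++ l₁) (l₂ ++ r) t u
  simpa using this

theorem HE.cons {w w' : List G} (h : HE w w') (t : G) : HE (t :: w) (t :: w') := by
  simpa using h.append [t] []

theorem HE.app2 {w w' v v' : List G} (h : HE w w') (h' : HE v v') : HE (w ++ v) (w' ++ v') := by
  have h1 := h.append [] v
  have h2 := h'.append w' []
  simp only [List.nil_append, List.append_nil] at h1 h2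
  exact h1.trans h2

theorem HE.prod {w w' : List G} (h : HE w w') : w.prod = w'.prod := by
  refine HE.lift (R := fun w w' => w.prod = w'.prod) (fun _ => rfl)
    (fun _ _ h => h.symm) (fun _ _ _ h h' => h.trans h') ?_ h
  intro l₁ l₂ t u
  simp [mul_assoc]

theorem HE.length {w w' : List G} (h : HE w w') : w.length = w'.length := by
  refine HE.lift (R := fun w w' => w.length = w'.length) (fun _ => rfl)
    (fun _ _ h => h.symm) (fun _ _ _ h h' => h.trans h') ?_ h
  intro l₁ l₂ t u
  simp

theorem HE.closure {w w' : List G} (h : HE w w') :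
    Subgroup.closure {t | t ∈ w} = Subgroup.closure {t | t ∈ w'} := by
  refine HE.lift (R := fun w w' => Subgroup.closure {t | t ∈ w} = Subgroup.closure {t | t ∈ w'})
    (fun _ => rfl) (fun _ _ h => h.symm) (fun _ _ _ h h' => h.trans h') ?_ h
  intro l₁ l₂ t u
  apply le_antisymm
  · rw [Subgroup.closure_le]
    intro s hs
    simp only [Set.mem_ofPred_eq, List.mem_append, List.mem_cons] at hs
    have hu : u ∈ Subgroup.closure {t_1 | t_1 ∈ l₁ ++ u :: (u⁻¹ * t * u) :: l₂} :=
      Subgroup.subset_closure (by simp)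
    have ht : (u⁻¹ * t * u) ∈ Subgroup.closure {t_1 | t_1 ∈ l₁ ++ u :: (u⁻¹ * t * u) :: l₂} :=
      Subgroup.subset_closure (by simp)
    rcases hs with hs | rfl | rfl | hs
    · exact Subgroup.subset_closure (by simp [hs])
    · have := mul_mem (mul_mem hu ht) (inv_mem hu)
      simpa [mul_assoc] using this
    · exact hu
    · exact Subgroup.subset_closure (by simp [hs])
  · rw [Subgroup.closure_le]
    intro s hs
    simp only [Set.mem_ofPred_eq, List.mem_append, List.mem_cons] at hs
    have hu : u ∈ Subgroup.closure {t_1 | t_1 ∈ l₁ ++ t :: u :: l₂} :=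
      Subgroup.subset_closure (by simp)
    have ht : t ∈ Subgroup.closure {t_1 | t_1 ∈ l₁ ++ t :: u :: l₂} :=
      Subgroup.subset_closure (by simp)
    rcases hs with hs | rfl | rfl | hs
    · exact Subgroup.subset_closure (by simp [hs])
    · exact hu
    · exact mul_mem (mul_mem (inv_mem hu) ht) hu
    · exact Subgroup.subset_closure (by simp [hs])

theorem HE.front (l₁ l₂ : List G) (u : G) :
    HE (l₁ ++ u :: l₂) (u :: (l₁.map (fun t => u⁻¹ * t * u) ++ l₂)) := by
  induction l₁ with
  | nil => exact HE.refl _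
  | cons t l ih =>
    have h1 := ih.cons t
    have h2 := HE.move [] (l.map (fun t => u⁻¹ * t * u) ++ l₂) t u
    exact h1.trans h2

theorem HE.toEnd (t : G) (w : List G) : HE (t :: w) (w ++ [w.prod⁻¹ * t * w.prod]) := by
  induction w generalizing t with
  | nil => simpa using HE.refl _
  | cons u w ih =>
    have h1 := HE.move [] w t u
    have h2 := (ih (u⁻¹ * t * u)).cons u
    refine h1.trans (h2.trans ?_)
    simp only [List.prod_cons, mul_inv_rev, List.cons_append, mul_assoc]
    exact HE.refl _

/-- `w` is equivalent to a word starting with `u`. -/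
def St (w : List G) (u : G) : Prop := ∃ w', HE w (u :: w')

theorem St.of_HE {w w' : List G} {u : G} (h : HE w w') (h' : St w' u) : St w u := by
  obtain ⟨v, hv⟩ := h'
  exact ⟨v, h.trans hv⟩

theorem St.step {w w' : List G} {t u : G} (h : HE w (t :: w')) (h' : St w' u) :
    St w u ∧ St w (u⁻¹ * t * u) := by
  obtain ⟨v, hv⟩ := h'
  have h1 : HE w (u :: (u⁻¹ * t * u) :: v) := h.trans ((hv.cons t).trans (HE.move [] v t u))
  exact ⟨⟨_, h1⟩, ⟨_, h1.trans (HE.front [u] v _)⟩⟩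

theorem St.rot {w : List G} {t : G} (h : St w t) : St w (w.prod⁻¹ * t * w.prod) := by
  obtain ⟨v, hv⟩ := h
  have h1 := hv.trans (HE.toEnd t v)
  have h2 := h1.trans (HE.front v [] _)
  have : v.prod⁻¹ * t * v.prod = w.prod⁻¹ * t * w.prod := by
    rw [hv.prod]
    simp [mul_assoc]
  rw [this] at h2
  exact ⟨_, h2⟩

theorem St.rot_pow {w : List G} {t : G} (h : St w t) (n : ℕ) :
    St w ((w.prod ^ n)⁻¹ * t * w.prod ^ n) := by
  induction n with
  | zero => simpa
  | succ n ih =>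
    have := ih.rot
    rw [pow_succ]
    simpa [mul_assoc] using this

end HE

section Red
variable {α : Type*} [Fintype α] [DecidableEq α]

/-- Reduced words of 3-cycles. -/
def Red (w : List (Perm α)) : Prop :=
  (∀ t ∈ w, t.IsThreeCycle) ∧ oc w.prod + 2 * w.length = Fintype.card α

theorem oc_one : oc (1 : Perm α) = Fintype.card α := by
  have : OC (1 : Perm α) = Finset.univ.image (fun p : α => ({p} : Finset α)) := by
    ext C
    simp only [mem_OC, Finset.mem_image, Finset.mem_univ, true_and]
    constructor
    · rintro ⟨-, p, rfl⟩
      exact ⟨p, (cls_fixed rfl).symm⟩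
    · rintro ⟨p, rfl⟩
      exact ⟨by simp, p, cls_fixed rfl⟩
  rw [oc, this, Finset.card_image_of_injective _ Finset.singleton_injective, Finset.card_univ]

theorem lower (w : List (Perm α)) (h : ∀ t ∈ w, t.IsThreeCycle) :
    Fintype.card α ≤ oc w.prod + 2 * w.length := by
  induction w with
  | nil => simp [oc_one]
  | cons t w ih =>
    have h1 := ih (fun s hs => h s (List.mem_cons_of_mem _ hs))
    have h2 := (struct_thm (h t List.mem_cons_self) (List.prod_cons (a := t) (l := w))).1
    rw [List.length_cons]
    omega

theorem Red.tail {t : Perm α} {w : List (Perm α)} (h : Red (t :: w)) :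
    t.IsThreeCycle ∧ Red w ∧ oc w.prod = oc (t * w.prod) + 2 := by
  have h0 : ∀ s ∈ w, s.IsThreeCycle := fun s hs => h.1 s (List.mem_cons_of_mem _ hs)
  have h1 := lower w h0
  have ht := h.1 t List.mem_cons_self
  have h2 := (struct_thm ht (List.prod_cons (a := t) (l := w))).1
  have h3 := h.2
  rw [List.length_cons] at h3
  rw [List.prod_cons] at h3 h2
  exact ⟨ht, ⟨h0, by omega⟩, by omega⟩

theorem Red.cons {t : Perm α} {w : List (Perm α)} (ht : t.IsThreeCycle) (h : Red w)
    (ho : oc w.prod = oc (t * w.prod) + 2) : Red (t :: w) := by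
  refine ⟨?_, ?_⟩
  · intro s hs
    rcases List.mem_cons.1 hs with rfl | hs
    · exact ht
    · exact h.1 s hs
  · have := h.2
    rw [List.length_cons, List.prod_cons]
    omega

theorem three_conj {t u : Perm α} : (u⁻¹ * t * u).IsThreeCycle ↔ t.IsThreeCycle := by
  unfold IsThreeCycle
  have := cycleType_conj (σ := t) (τ := u⁻¹)
  rw [inv_inv] at this
  rw [this]

theorem HE.three {w w' : List (Perm α)} (h : HE w w') :
    (∀ t ∈ w, t.IsThreeCycle) ↔ (∀ t ∈ w', t.IsThreeCycle) := by
  refine HE.lift (R := fun (w w' : List (Perm α)) =>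
      (∀ t ∈ w, Equiv.Perm.IsThreeCycle t) ↔ (∀ t ∈ w', Equiv.Perm.IsThreeCycle t))
    (fun _ => Iff.rfl) (fun _ _ h => h.symm) (fun _ _ _ h h' => h.trans h') ?_ h
  intro l₁ l₂ t u
  simp only [List.mem_append, List.mem_cons, or_imp, forall_and, forall_eq, three_conj]
  tauto

theorem HE.red {w w' : List (Perm α)} (h : HE w w') : Red w ↔ Red w' := by
  unfold Red
  rw [h.three, h.prod, h.length]

theorem Red.suffix {w v : List (Perm α)} (h : Red (w ++ v)) : Red v := by
  induction w with
  | nil => simpa using h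
  | cons t w ih => exact ih h.tail.2.1

theorem Red.eq_nil {w : List (Perm α)} (h : Red w) (h1 : w.prod = 1) : w = [] := by
  have := h.2
  rw [h1, oc_one] at this
  exact List.length_eq_zero_iff.1 (by omega)

theorem inv_pow_of {x : Perm α} {n : ℕ} {p a : α} (h : (x ^ n) p = a) : (x ^ n)⁻¹ a = p := by
  rw [← h]; simp

theorem inv_pow_comm (x : Perm α) (n : ℕ) (a : α) : (x ^ n)⁻¹ (x a) = x ((x ^ n)⁻¹ a) := by
  have : Commute (x ^ n)⁻¹ x := ((Commute.refl x).pow_left n).inv_left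
  exact congrArg (fun g : Perm α => g a) this.eq

/-- Conjugate starting letters around cycles. -/
theorem St.rotc3 {w : List (Perm α)} {a b c p : α} (h : St w (c3 a b c))
    (hp : w.prod.SameCycle p a) : ∃ n : ℕ, (w.prod ^ n)⁻¹ a = p ∧
      St w (c3 ((w.prod ^ n)⁻¹ a) ((w.prod ^ n)⁻¹ b) ((w.prod ^ n)⁻¹ c)) := by
  obtain ⟨n, hn⟩ := hp.exists_nat_pow_eq
  refine ⟨n, inv_pow_of hn, ?_⟩
  have := h.rot_pow n
  have e := c3_conj (w.prod ^ n)⁻¹ a b c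
  rw [inv_inv] at e
  rwa [e] at this

theorem St.rot_tp {w : List (Perm α)} {a p : α} 
    (h : St w (c3 a (w.prod a) (w.prod (w.prod a)))) (hp : w.prod.SameCycle p a) :
    St w (c3 p (w.prod p) (w.prod (w.prod p))) := by
  obtain ⟨n, hn, h1⟩ := h.rotc3 hp
  simpa only [inv_pow_comm, hn] using h1

theorem apply_off {x y : Perm α} {a b c q : α} (hxy : x = c3 a b c * y)
    (h1 : y q ≠ a) (h2 : y q ≠ b) (h3 : y q ≠ c) : x q = y q := by
  rw [hxy, Perm.mul_apply, c3_ne h1 h2 h3]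

theorem apply_off' {x y : Perm α} {a b c q : α} (hxy : x = c3 a b c * y)
    (h1 : x q ≠ a) (h2 : x q ≠ b) (h3 : x q ≠ c) : y q = x q := by
  have : y q = (c3 a b c)⁻¹ (x q) := by rw [hxy]; simp
  rw [this, c3i_ne h1 h2 h3]

/-- Consequence of the structure theorem for odd cycles. -/
theorem odd_touch {x y : Perm α} {a b c : α} (hd : D3 a b c) (hxy : x = c3 a b c * y)
    (ho : oc y = oc x + 2) (hab : x.SameCycle a b) {p : α} (hp : Odd (cls x p).card)
    (ht : x.SameCycle p a ∨ x.SameCycle p b ∨ x.SameCycle p c) :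
    x.SameCycle p a ∧ x.SameCycle a c ∧ ¬ y.SameCycle a b ∧ ¬ y.SameCycle a c ∧ ¬ y.SameCycle b c ∧
      (∀ q, x.SameCycle a q ↔ y.SameCycle a q ∨ y.SameCycle b q ∨ y.SameCycle c q) ∧
      Odd (cls y a).card ∧ Odd (cls y b).card ∧ Odd (cls y c).card := by
  by_cases hac : x.SameCycle a c
  · have hpa : x.SameCycle p a := by
      rcases ht with h | h | h
      · exact h
      · exact h.trans hab.symm
      · exact h.trans hac.symm
    obtain ⟨h1, h2, h3, h4, h5, h6⟩ := (L12 hd hxy hab hac).2 ho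
    rw [cls_eq_iff.2 hpa, h5] at hp
    refine ⟨hpa, hac, h1, h2, h3, h4, ?_⟩
    simp only [Nat.odd_iff] at *
    omega
  · obtain ⟨-, -, -, -, -, h1, h2⟩ := (L3 hd hxy hab hac).2 ho
    exfalso
    rw [← Nat.not_even_iff_odd] at hp
    rcases ht with h | h | h
    · exact hp (by rw [cls_eq_iff.2 h]; exact h1)
    · exact hp (by rw [cls_eq_iff.2 (h.trans hab.symm)]; exact h1)
    · exact hp (by rw [cls_eq_iff.2 h]; exact h2)

/-- Main lemma on odd cycles. -/
theorem odd_start (w : List (Perm α)) (hw : Red w) (p : α) (hp : Odd (cls w.prod p).card)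
    (hne : w.prod p ≠ p) : St w (c3 p (w.prod p) (w.prod (w.prod p))) := by
  induction w generalizing p with
  | nil => simp at hne
  | cons t w ih =>
    obtain ⟨ht, hrw, ho⟩ := hw.tail
    obtain ⟨x, hx⟩ : ∃ x, x = (t :: w).prod := ⟨_, rfl⟩
    obtain ⟨y, hy⟩ : ∃ y, y = w.prod := ⟨_, rfl⟩
    have hxy : x = t * y := by rw [hx, hy, List.prod_cons]
    rw [← hy, ← hxy] at ho
    rw [← hx] at hp hne
    have rt := @St.rot_tp _ _ _ (t :: w)
    rw [← hx] at rt ⊢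
    rw [← hy] at ih
    obtain ⟨a, b, c, hd, rfl, hab⟩ := (struct_thm ht hxy).2 ho
    by_cases htouch : x.SameCycle p a ∨ x.SameCycle p b ∨ x.SameCycle p c
    · obtain ⟨hpa, hac, k1, k2, k3, -, o1, o2, o3⟩ := odd_touch hd hxy ho hab hp htouch
      have key : ∀ a' b' c', x = c3 a' b' c' * y → ¬ y.SameCycle a' b' → ¬ y.SameCycle a' c' →
          Odd (cls y a').card → y a' ≠ a' → x.SameCycle p a' →
          St (c3 a b c :: w) (c3 p (x p) (x (x p))) := by
        intro a' b' c' e1 e2 e3 e4 e5 e6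
        have s := ih hrw a' e4 e5
        have n2 : y (y a') ≠ a' := fun h => e5 (odd2 e4 h)
        have y1 := same_app y a'
        have y2 : y.SameCycle a' (y (y a')) := sameCycle_apply_right.2 y1
        have x1 : x a' = y a' := apply_off e1 e5 (fun h => e2 (h ▸ y1)) (fun h => e3 (h ▸ y1))
        have x2 : x (y a') = y (y a') := apply_off e1 n2 (fun h => e2 (h ▸ y2)) (fun h => e3 (h ▸ y2))
        have := (St.step (HE.refl _) s : St (c3 a b c :: w) _ ∧ _).1
        refine rt ?_ e6
        rw [x1, x2]
        exact this
      by_cases ya : y a = a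
      · by_cases yb : y b = b
        · by_cases yc : y c = c
          · have xa : x a = b := by rw [hxy, Perm.mul_apply, ya, c3_1 hd]
            have xb : x b = c := by rw [hxy, Perm.mul_apply, yb, c3_2 hd]
            refine rt (a := a) ?_ hpa
            rw [xa, xb]
            exact ⟨w, HE.refl _⟩
          · exact key c a b (by rw [← c3_rot hd.rot, ← c3_rot hd]; exact hxy) (fun h => k2 h.symm)
              (fun h => k3 h.symm) o3 yc (hpa.trans hac)
        · exact key b c a (by rw [← c3_rot hd]; exact hxy) k3 (fun h => k1 h.symm) o2 yb (hpa.trans hab)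
      · exact key a b c hxy k1 k2 o1 ya hpa
    · push Not at htouch
      obtain ⟨u1, u2⟩ := untouched hxy htouch.1 htouch.2.1 htouch.2.2
      have y1 : y p = x p := u1 p (SameCycle.refl _ _)
      have y2 : y (x p) = x (x p) := u1 _ (same_app _ _)
      have s := ih hrw p (by rw [u2]; exact hp) (by rw [y1]; exact hne)
      rw [y1, y2] at s
      exact (St.step (HE.refl _) s).1

/-- All cycles are odd. -/
def AllOdd (x : Perm α) : Prop := ∀ p, Odd (cls x p).card

theorem AllOdd.tail {t y : Perm α} (ht : t.IsThreeCycle) (hx : AllOdd (t * y))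
    (ho : oc y = oc (t * y) + 2) : AllOdd y := by
  obtain ⟨x, hxy⟩ : ∃ x, x = t * y := ⟨_, rfl⟩
  rw [← hxy] at ho hx
  obtain ⟨a, b, c, hd, rfl, hab⟩ := (struct_thm ht hxy).2 ho
  intro p
  by_cases htouch : x.SameCycle p a ∨ x.SameCycle p b ∨ x.SameCycle p c
  · obtain ⟨hpa, hac, -, -, -, k4, o1, o2, o3⟩ := odd_touch hd hxy ho hab (hx p) htouch
    rcases (k4 p).1 hpa.symm with h | h | h
    · rw [← cls_eq_iff.2 h]; exact o1
    · rw [← cls_eq_iff.2 h]; exact o2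
    · rw [← cls_eq_iff.2 h]; exact o3
  · push Not at htouch
    rw [(untouched hxy htouch.1 htouch.2.1 htouch.2.2).2]
    exact hx p

/-- Transitivity in the odd case. -/
theorem odd_trans (n : ℕ) : ∀ (w v : List (Perm α)), w.length = n → Red w → Red v → w.prod = v.prod →
    AllOdd w.prod → HE w v := by
  induction n with
  | zero =>
    intro w v hn hw hv h ho
    have := List.length_eq_zero_iff.1 hn
    subst this
    rw [hv.eq_nil h.symm]
    exact HE.refl _
  | succ n ih =>
    intro w v hn hw hv h ho
    have h1 : w.prod ≠ 1 := by
      intro h1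
      rw [hw.eq_nil h1] at hn
      simp at hn
    obtain ⟨p, hp⟩ : ∃ p, w.prod p ≠ p := by
      by_contra! h2
      exact h1 (Perm.ext h2)
    obtain ⟨w', hw'⟩ := odd_start w hw p (ho p) hp
    obtain ⟨v', hv'⟩ := odd_start v hv p (h ▸ ho p) (h ▸ hp)
    rw [← h] at hv'
    have e1 := hw'.prod
    have e2 := hv'.prod
    rw [List.prod_cons] at e1 e2
    have e3 : w'.prod = v'.prod := mul_left_cancel (e1.symm.trans (h.trans e2))
    have r1 := (hw'.red.1 hw).tail
    have r2 := (hv'.red.1 hv).tail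
    have := ih w' v' (by have := hw'.length; rw [List.length_cons] at this; omega) r1.2.1 r2.2.1 e3 
      (AllOdd.tail r1.1 (e1 ▸ ho) r1.2.2)
    exact hw'.trans ((this.cons _).trans hv'.symm)

/-- `g` preserves `S`. -/
def Pres (S : Finset α) (g : Perm α) : Prop := ∀ q, g q ∈ S ↔ q ∈ S

/-- Letters of reduced words preserve odd cycles. -/
theorem pres_odd (w : List (Perm α)) (hw : Red w) (p : α) (hp : Odd (cls w.prod p).card) :
    ∀ s ∈ w, Pres (cls w.prod p) s := by
  induction w generalizing p with
  | nil => simp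
  | cons t w ih =>
    obtain ⟨ht, hrw, ho⟩ := hw.tail
    obtain ⟨x, hx⟩ : ∃ x, x = (t :: w).prod := ⟨_, rfl⟩
    obtain ⟨y, hy⟩ : ∃ y, y = w.prod := ⟨_, rfl⟩
    have hxy : x = t * y := by rw [hx, hy, List.prod_cons]
    rw [← hy, ← hxy] at ho
    rw [← hx] at hp ⊢
    rw [← hy] at ih
    obtain ⟨a, b, c, hd, rfl, hab⟩ := (struct_thm ht hxy).2 ho
    by_cases htouch : x.SameCycle p a ∨ x.SameCycle p b ∨ x.SameCycle p c
    · obtain ⟨hpa, hac, -, -, -, k4, o1, o2, o3⟩ := odd_touch hd hxy ho hab hp htouch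
      have hU : ∀ q, q ∈ cls x p ↔ q ∈ cls y a ∨ q ∈ cls y b ∨ q ∈ cls y c := by
        intro q
        rw [cls_eq_iff.2 hpa]
        simp only [mem_cls]
        exact k4 q
      intro s hs
      rcases List.mem_cons.1 hs with rfl | hs
      · intro q
        have ma : a ∈ cls x p := mem_cls.2 hpa
        have mb : b ∈ cls x p := mem_cls.2 (hpa.trans hab)
        have mc : c ∈ cls x p := mem_cls.2 (hpa.trans hac)
        by_cases h1 : q = a
        · subst h1; rw [c3_1 hd]; tauto
        by_cases h2 : q = b
        · subst h2; rw [c3_2 hd]; tauto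
        by_cases h3 : q = c
        · subst h3; rw [c3_3]; tauto
        rw [c3_ne h1 h2 h3]
      · intro q
        rw [hU, hU, ih hrw a o1 s hs q, ih hrw b o2 s hs q, ih hrw c o3 s hs q]
    · push Not at htouch
      have u2 := (untouched hxy htouch.1 htouch.2.1 htouch.2.2).2
      intro s hs
      rcases List.mem_cons.1 hs with rfl | hs
      · intro q
        by_cases h1 : q = a
        · subst h1; rw [c3_1 hd, mem_cls, mem_cls]; tauto
        by_cases h2 : q = b
        · subst h2; rw [c3_2 hd, mem_cls, mem_cls]; tauto
        by_cases h3 : q = c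
        · subst h3; rw [c3_3, mem_cls, mem_cls]; tauto
        rw [c3_ne h1 h2 h3]
      · have := ih hrw p (by rw [u2]; exact hp) s hs
        rwa [u2] at this

end Red
end H19


namespace H19
set_option linter.unusedSectionVars false

section Even
variable {α : Type*} [Fintype α] [DecidableEq α]

theorem c3_conj' (g : Perm α) (a b c : α) : g⁻¹ * c3 a b c * g = c3 (g⁻¹ a) (g⁻¹ b) (g⁻¹ c) := by
  have e := c3_conj g⁻¹ a b c
  rwa [inv_inv] at e

theorem inv_app {x t y : Perm α} (e : x = t * y) (r : α) : y r = t⁻¹ (x r) := by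
  subst e; simp

theorem ne_of_ns {x : Perm α} {a b : α} (h : ¬ x.SameCycle a b) : a ≠ b := by
  rintro rfl; exact h (SameCycle.refl _ _)

theorem St.rotb {w : List (Perm α)} {q c p : α} (h : St w (c3 q (w.prod q) c))
    (hq : ¬ w.prod.SameCycle q c) (hp : w.prod.SameCycle p q) :
    ∃ b, ¬ w.prod.SameCycle p b ∧ w.prod.SameCycle c b ∧ St w (c3 p (w.prod p) b) := by
  obtain ⟨n, hn, h1⟩ := h.rotc3 hp
  have hc : w.prod.SameCycle c ((w.prod ^ n)⁻¹ c) := ⟨-n, by simp⟩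
  refine ⟨(w.prod ^ n)⁻¹ c, fun h2 => hq (hp.symm.trans (h2.trans hc.symm)), hc, ?_⟩
  simpa only [inv_pow_comm, hn] using h1

/-- From a starting letter to the tail. -/
theorem St.data {w : List (Perm α)} (hw : Red w) {t : Perm α} (h : St w t) :
    ∃ w', HE w (t :: w') ∧ Red w' ∧ w.prod = t * w'.prod ∧ oc w'.prod = oc w.prod + 2 ∧
      t.IsThreeCycle := by
  obtain ⟨w', h1⟩ := h
  have e := h1.prod
  rw [List.prod_cons] at e
  have r := (h1.red.1 hw).tail
  rw [← e] at r
  exact ⟨w', h1, r.2.1, e, r.2.2, r.1⟩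

theorem adj (n : ℕ) : ∀ (w : List (Perm α)), Red w → ∀ a b c, D3 a b c → St w (c3 a b c) →
    (w.prod ^ n) a = b → ¬ w.prod.SameCycle a c →
    ∃ q, w.prod.SameCycle a q ∧ St w (c3 q (w.prod q) c) := by
  induction n using Nat.strong_induction_on with
  | _ n ih =>
  intro w hw a b c hd hs hn hac
  obtain ⟨w', h1, hr, e, ho, ht⟩ := St.data hw hs
  obtain ⟨x, hx⟩ : ∃ x, x = w.prod := ⟨_, rfl⟩
  obtain ⟨y, hy⟩ : ∃ y, y = w'.prod := ⟨_, rfl⟩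
  have ih' := fun m hm => ih m hm w hw
  have os := odd_start w' hr
  rw [← hx, ← hy] at e ho
  rw [← hx] at ih' hac hn ⊢
  rw [← hy] at os
  have hab : x.SameCycle a b := ⟨n, by simpa using hn⟩
  obtain ⟨l1, l2, l3, l4, l5, l6, l7⟩ := (L3 hd e hab hac).2 ho
  by_cases c1 : x a = b
  · exact ⟨a, SameCycle.refl _ _, by rw [c1]; exact hs⟩
  have xa := even_ne l6
  have sa := same_app x a
  have sa2 : x.SameCycle a (x (x a)) := sameCycle_apply_right.2 sa
  have ya : y a = x a := apply_off' e xa c1 (fun h => hac (h ▸ sa))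
  by_cases c2 : x (x a) = b
  · exfalso
    have : y (x a) = (c3 a b c)⁻¹ (x (x a)) := by rw [e]; simp
    rw [c2, c3i_1 hd] at this
    have := odd2 l1 (by rw [ya]; exact this)
    exact xa (ya ▸ this)
  have hn3 : 3 ≤ n := by
    by_contra h
    have : n = 0 ∨ n = 1 ∨ n = 2 := by omega
    rcases this with rfl | rfl | rfl
    · exact hd.1 (by simpa using hn)
    · exact c1 (by simpa using hn)
    · exact c2 (by simpa [pow_two] using hn)
  have hn2 : (x ^ (n-2)) (x (x a)) = b := by
    have : x ^ n = x ^ (n-2) * (x * x) := by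
      rw [← pow_two, ← pow_add]; congr 1; omega
    rw [this] at hn
    simpa using hn
  by_cases c4 : x (x a) = a
  · rw [c4] at hn2
    exact ih' (n-2) (by omega) a b c hd hs hn2 hac
  have yxa : y (x a) = x (x a) := apply_off' e c4 c2 (fun h => hac (h ▸ sa2))
  have s1 := os a l1 (by rw [ya]; exact xa)
  rw [ya, yxa] at s1
  have s2 := (St.step h1 s1).2
  rw [c3_conj', c3i_3, c3i_ne hd.1.symm (Ne.symm c1) (Ne.symm c2),
    c3i_ne hd.2.2.symm (fun h => hac (h ▸ sa)) (fun h => hac (h ▸ sa2))] at s2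
  obtain ⟨q, k1, k2⟩ := ih' (n-2) (by omega) (x (x a)) b c
    ⟨c2, hd.2.1, fun h => hac (h ▸ sa2)⟩ s2 hn2 (fun h => hac (sa2.trans h))
  exact ⟨q, sa2.trans k1, k2⟩

/-- data attached to an even starting letter -/
theorem even_data {w : List (Perm α)} (hw : Red w) {p b : α} (hp : w.prod p ≠ p)
    (hpb : ¬ w.prod.SameCycle p b) (h : St w (c3 p (w.prod p) b)) :
    D3 p (w.prod p) b ∧ Even (cls w.prod p).card ∧ Even (cls w.prod b).card ∧
    ∃ w', HE w (c3 p (w.prod p) b :: w') ∧ Red w' ∧ w.prod = c3 p (w.prod p) b * w'.prod ∧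
      oc w'.prod = oc w.prod + 2 ∧ Odd (cls w'.prod b).card := by
  have hd : D3 p (w.prod p) b :=
    ⟨hp.symm, fun h => hpb (h ▸ same_app _ p), ne_of_ns hpb⟩
  obtain ⟨w', h1, hr, e, ho, ht⟩ := St.data hw h
  obtain ⟨l1, l2, l3, l4, l5, l6, l7⟩ := (L3 hd e (same_app _ p) hpb).2 ho
  exact ⟨hd, l6, l7, w', h1, hr, e, ho, by rw [← cls_eq_iff.2 l5]; exact l2⟩

theorem even_start (w : List (Perm α)) (hw : Red w) (p : α) (hp : Even (cls w.prod p).card) :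
    ∃ b, ¬ w.prod.SameCycle p b ∧ St w (c3 p (w.prod p) b) := by
  induction w generalizing p with
  | nil => 
    exact absurd rfl (even_ne (a := p) hp)
  | cons t w ih =>
    obtain ⟨ht, hrw, ho⟩ := hw.tail
    obtain ⟨x, hx⟩ : ∃ x, x = (t :: w).prod := ⟨_, rfl⟩
    obtain ⟨y, hy⟩ : ∃ y, y = w.prod := ⟨_, rfl⟩
    have hxy : x = t * y := by rw [hx, hy, List.prod_cons]
    have ed := fun {p b} => even_data (p := p) (b := b) hrw
    rw [← hy, ← hxy] at ho
    rw [← hx] at hp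
    have rb := @St.rotb _ _ _ (t :: w)
    rw [← hx] at rb ⊢
    rw [← hy] at ih ed
    obtain ⟨a, b, c, hd, rfl, hab⟩ := (struct_thm ht hxy).2 ho
    by_cases htouch : x.SameCycle p a ∨ x.SameCycle p b ∨ x.SameCycle p c
    · by_cases hac : x.SameCycle a c
      · have hpa : x.SameCycle p a := by
          rcases htouch with h | h | h
          · exact h
          · exact h.trans hab.symm
          · exact h.trans hac.symm
        obtain ⟨k1, k2, k3, k4, k5, k6⟩ := (L12 hd hxy hab hac).2 ho
        have key : ∀ a' b' c', x = c3 a' b' c' * y → ¬ y.SameCycle c' a' → ¬ y.SameCycle c' b' →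
            Odd (cls y a').card → Odd (cls y b').card → Even (cls y c').card →
            x.SameCycle a c' →
            (∀ q, x.SameCycle a q → y.SameCycle a' q ∨ y.SameCycle b' q ∨ y.SameCycle c' q) →
            ∃ b_1, ¬ x.SameCycle p b_1 ∧ St (c3 a b c :: w) (c3 p (x p) b_1) := by
          intro a' b' c' f1 f2 f3 f4 f5 f6 f7 f8
          obtain ⟨d, g1, g2⟩ := ih hrw c' f6
          have hne := even_ne f6
          obtain ⟨-, -, g3, -⟩ := ed hne g1 g2
          have y1 := same_app y c'
          have x1 : x c' = y c' := apply_off f1 (fun h => f2 (h ▸ y1)) (fun h => f3 (h ▸ y1)) hne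
          have hn : ¬ x.SameCycle c' d := by
            intro h
            rcases f8 d (f7.trans h) with h | h | h
            · rw [cls_eq_iff.2 h] at f4
              exact (Nat.not_even_iff_odd.2 f4) g3
            · rw [cls_eq_iff.2 h] at f5
              exact (Nat.not_even_iff_odd.2 f5) g3
            · exact g1 h
          rw [← x1] at g2
          obtain ⟨b1, q1, -, q2⟩ := rb (St.step (HE.refl _) g2).1 hn (hpa.trans f7)
          exact ⟨b1, q1, q2⟩
        rw [cls_eq_iff.2 hpa, k5] at hp
        have par : (Odd (cls y a).card ∧ Odd (cls y b).card ∧ Even (cls y c).card) ∨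
            (Odd (cls y b).card ∧ Odd (cls y c).card ∧ Even (cls y a).card) ∨
            (Odd (cls y c).card ∧ Odd (cls y a).card ∧ Even (cls y b).card) := by
          simp only [Nat.odd_iff, Nat.even_iff] at *
          omega
        rcases par with ⟨o1, o2, o3⟩ | ⟨o1, o2, o3⟩ | ⟨o1, o2, o3⟩
        · exact key a b c hxy (fun h => k2 h.symm) (fun h => k3 h.symm) o1 o2 o3 hac
            (fun q h => (k4 q).1 h)
        · exact key b c a (by rw [← c3_rot hd]; exact hxy) k1 k2 o1 o2 o3 (SameCycle.refl _ _)
            (fun q h => by have := (k4 q).1 h; tauto)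
        · exact key c a b (by rw [← c3_rot hd.rot, ← c3_rot hd]; exact hxy) k3
            (fun h => k1 h.symm) o1 o2 o3 hab
            (fun q h => by have := (k4 q).1 h; tauto)
      · obtain ⟨n, hn⟩ := hab.exists_nat_pow_eq
        have A := adj n (c3 a b c :: w) hw a b c hd ⟨w, HE.refl _⟩
        have ed' := fun {p b} => even_data (p := p) (b := b) hw
        rw [← hx] at A ed'
        obtain ⟨q, q1, q2⟩ := A hn hac
        have e6 : Even (cls x a).card := ((L3 hd hxy hab hac).2 ho).2.2.2.2.2.1
        have hqc : ¬ x.SameCycle q c := fun h => hac (q1.trans h)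
        by_cases hpa : x.SameCycle p a
        · obtain ⟨b1, r1, -, r2⟩ := rb q2 hqc (hpa.trans q1)
          exact ⟨b1, r1, r2⟩
        · have hpc : x.SameCycle p c := by
            rcases htouch with h | h | h
            · exact absurd h hpa
            · exact absurd (h.trans hab.symm) hpa
            · exact h
          rw [cls_eq_iff.2 q1] at e6
          obtain ⟨hd', -, ec, w', h1, hr', e', ho', od⟩ := ed' (even_ne e6) hqc q2
          have os := odd_start w' hr'
          obtain ⟨z, hz⟩ : ∃ z, z = w'.prod := ⟨_, rfl⟩
          rw [← hz] at e' ho' od os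
          obtain ⟨r, hr⟩ : ∃ r, x r = q := ⟨x⁻¹ q, by simp⟩
          have rq : x.SameCycle r q := hr ▸ same_app x r
          have hrc : ¬ x.SameCycle r c := fun h => hqc (rq.symm.trans h)
          have zr : z r = c := by
            rw [inv_app e', hr, c3i_3]
          have zc : z c = x c := apply_off' e' (fun h => hqc (h ▸ same_app x c).symm)
            (fun h => hqc (sameCycle_apply_left.1 (h ▸ same_app x c).symm)) (even_ne ec)
          have src : z.SameCycle r c := zr ▸ same_app z r
          have s := os r (by rw [cls_eq_iff.2 src]; exact od) (by rw [zr]; exact (ne_of_ns hrc).symm)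
          rw [zr, zc] at s
          have s' := (St.step h1 s).1
          rw [c3_rot ⟨ne_of_ns hrc, (even_ne ec).symm, fun h => hrc (h ▸ same_app x c).symm⟩] at s'
          obtain ⟨b1, r1, -, r2⟩ := rb s' (fun h => hrc h.symm) hpc
          exact ⟨b1, r1, r2⟩
    · push Not at htouch
      obtain ⟨u1, u2⟩ := untouched hxy htouch.1 htouch.2.1 htouch.2.2
      have y1 : y p = x p := u1 p (SameCycle.refl _ _)
      obtain ⟨d, d1, d2⟩ := ih hrw p (by rw [u2]; exact hp)
      rw [y1] at d2
      refine ⟨d, fun h => d1 ?_, (St.step (HE.refl _) d2).1⟩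
      rw [← mem_cls, u2, mem_cls]
      exact h

/-- shift `b` by two -/
theorem even_shift {w : List (Perm α)} (hw : Red w) {p b : α} (hp : w.prod p ≠ p)
    (hpb : ¬ w.prod.SameCycle p b) (h : St w (c3 p (w.prod p) b)) :
    St w (c3 p (w.prod p) (w.prod (w.prod b))) := by
  obtain ⟨hd, e1, e2, w', h1, hr', e', ho', od⟩ := even_data hw hp hpb h
  have os := odd_start w' hr'
  obtain ⟨x, hx⟩ : ∃ x, x = w.prod := ⟨_, rfl⟩
  obtain ⟨z, hz⟩ : ∃ z, z = w'.prod := ⟨_, rfl⟩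
  rw [← hz] at e' ho' od os
  rw [← hx] at hp hpb h hd e1 e2 h1 e' ho' ⊢
  by_cases c1 : x (x b) = b
  · rw [c1]; exact h
  have sb := same_app x b
  have sb2 : x.SameCycle b (x (x b)) := sameCycle_apply_right.2 sb
  have hxpb : ¬ x.SameCycle (x p) b := fun h => hpb (sameCycle_apply_left.1 h)
  have zb : z b = x b := apply_off' e' (fun h => hpb (h ▸ sb).symm) (fun h => hxpb (h ▸ sb).symm)
    (even_ne e2)
  have zxb : z (x b) = x (x b) := apply_off' e' (fun h => hpb (h ▸ sb2).symm)
    (fun h => hxpb (h ▸ sb2).symm) c1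
  have s := os b od (by rw [zb]; exact even_ne e2)
  rw [zb, zxb] at s
  have s' := (St.step h1 s).2
  rwa [c3_conj', c3i_3, c3i_ne, c3i_ne] at s'
  · exact fun h => hxpb (h ▸ SameCycle.refl _ _)
  · exact fun h => hxpb (h ▸ sb).symm
  · exact fun h => hxpb (h ▸ sb2).symm
  · exact fun h => hpb (h ▸ SameCycle.refl _ _)
  · exact fun h => hpb (h ▸ sb).symm
  · exact fun h => hpb (h ▸ sb2).symm

/-- normal form of `b` -/
theorem even_norm {w : List (Perm α)} (hw : Red w) {p b b0 : α} (hp : w.prod p ≠ p)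
    (hpb : ¬ w.prod.SameCycle p b) (h : St w (c3 p (w.prod p) b)) (hb : w.prod.SameCycle b b0) :
    St w (c3 p (w.prod p) b0) ∨ St w (c3 p (w.prod p) (w.prod b0)) := by
  obtain ⟨n, rfl⟩ := hb.exists_nat_pow_eq
  clear hb
  induction n with
  | zero => exact Or.inl (by simpa using h)
  | succ n ih =>
    rw [pow_succ', Perm.mul_apply]
    rcases ih with h1 | h1
    · right
      exact even_shift hw hp (fun h => hpb (h.trans ⟨-n, by simp⟩)) h1
    · left; exact h1

end Even
end H19


namespace H19
set_option linter.unusedSectionVars false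

section Join
variable {α : Type*} [Fintype α] [DecidableEq α]

theorem joiner {x y : Perm α} {p b : α} (hp : Even (cls x p).card) (hb : Even (cls x b).card)
    (hpb : ¬ x.SameCycle p b) (e : x = c3 p (x p) b * y) :
    oc y = oc x + 2 ∧ cls y p = {p} ∧ (∀ q, q ∈ cls x p ∪ cls x b ↔ q ∈ cls y p ∪ cls y b) ∧
      Odd (cls y b).card ∧ (∀ q, q ∉ cls x p ∪ cls x b → cls y q = cls x q) := by
  have hne := even_ne hp
  have hd : D3 p (x p) b := ⟨hne.symm, fun h => hpb (h ▸ same_app _ p), ne_of_ns hpb⟩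
  obtain ⟨z, hz⟩ : ∃ z, z = swap p (x p) * x := ⟨_, rfl⟩
  have hxz : x = swap p (x p) * z := by rw [hz]; simp
  have hyz : y = swap (x p) b * z := by
    have : y = (c3 p (x p) b)⁻¹ * x := by rw [eq_inv_mul_iff_mul_eq]; exact e.symm
    rw [this, c3_inv, hz, mul_assoc]
  have n1 : ¬ z.SameCycle p (x p) := by
    rw [hz]; exact split_not hne.symm (same_app _ _)
  have zp : z p = p := by rw [hz]; simp
  have yp : y p = p := by rw [inv_app e, c3i_1 hd]
  have cz : cls z p = {p} := cls_fixed zp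
  have cm : cls x p = cls z p ∪ cls z (x p) := by
    have := cls_merge n1
    rwa [← hxz] at this
  have nzpb : ¬ z.SameCycle p b := by
    intro h
    apply hpb
    rw [← mem_cls, cm, Finset.mem_union]
    left; exact mem_cls.2 h
  have nzxb : ¬ z.SameCycle (x p) b := by
    intro h
    apply hpb
    rw [← mem_cls, cm, Finset.mem_union]
    right; exact mem_cls.2 h
  have cb : cls x b = cls z b := by
    have := cls_merge_other n1 nzpb nzxb
    rwa [← hxz] at this
  have card1 : (cls x p).card = 1 + (cls z (x p)).card := by
    have := card_merge n1
    rw [← hxz, cz] at this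
    simpa using this
  have oz : Odd (cls z (x p)).card := by
    rw [card1] at hp
    rw [Nat.even_iff] at hp
    rw [Nat.odd_iff]
    omega
  have cy : cls y b = cls z (x p) ∪ cls z b := by
    have := cls_merge nzxb
    rw [← hyz] at this
    rw [← this]
    symm
    rw [cls_eq_iff, hyz]
    exact merge_ab nzxb
  have o1 := oc_merge n1
  have o2 := oc_merge nzxb
  rw [← hxz, if_pos ⟨by rw [cz]; simp, oz⟩] at o1
  rw [← hyz, if_neg (by rw [← cb]; rintro ⟨-, h⟩; exact (Nat.not_even_iff_odd.2 h) hb)] at o2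
  refine ⟨by omega, cls_fixed yp, ?_, ?_, ?_⟩
  · intro q
    rw [cls_fixed yp, cy, cm, cb, cz, Finset.union_assoc]
  · rw [cy, Finset.card_union_of_disjoint (cls_disj nzxb), ← cb]
    exact oz.add_even hb
  · intro q hq
    simp only [Finset.mem_union, mem_cls, not_or] at hq
    exact (untouched e (fun h => hq.1 h.symm)
      (fun h => hq.1 (sameCycle_apply_right.1 h).symm) (fun h => hq.2 h.symm)).2

theorem joiner_EC {x y : Perm α} {p b : α} (hp : Even (cls x p).card) (hb : Even (cls x b).card)
    (hpb : ¬ x.SameCycle p b) (e : x = c3 p (x p) b * y) :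
    (EC y).card + 2 = (EC x).card := by
  obtain ⟨-, h1, h2, h3, h4⟩ := joiner hp hb hpb e
  have mA : cls x p ∈ EC x := mem_EC.2 ⟨hp, p, rfl⟩
  have mB : cls x b ∈ (EC x).erase (cls x p) :=
    Finset.mem_erase.2 ⟨fun h => hpb (cls_eq_iff.1 h).symm, mem_EC.2 ⟨hb, b, rfl⟩⟩
  have : EC y = ((EC x).erase (cls x p)).erase (cls x b) := by
    ext C
    simp only [Finset.mem_erase, mem_EC]
    constructor
    · rintro ⟨hC, q, rfl⟩
      have hq : q ∉ cls x p ∪ cls x b := by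
        intro hq
        rw [h2, Finset.mem_union, mem_cls, mem_cls] at hq
        rcases hq with hq | hq
        · rw [← cls_eq_iff.2 hq, h1] at hC
          simp at hC
        · rw [← cls_eq_iff.2 hq] at hC
          exact (Nat.not_even_iff_odd.2 h3) hC
      have := h4 q hq
      rw [this] at hC ⊢
      simp only [Finset.mem_union, mem_cls, not_or] at hq
      exact ⟨fun h => hq.2 (cls_eq_iff.1 h).symm, fun h => hq.1 (cls_eq_iff.1 h).symm, hC, q, rfl⟩
    · rintro ⟨g1, g2, hC, q, rfl⟩
      refine ⟨hC, q, h4 q ?_⟩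
      simp only [Finset.mem_union, mem_cls, not_or]
      exact ⟨fun h => g2 (cls_eq_iff.2 h.symm), fun h => g1 (cls_eq_iff.2 h.symm)⟩
  rw [this, Finset.card_erase_of_mem mB, Finset.card_erase_of_mem mA]
  have := Finset.card_pos.2 ⟨_, mB⟩
  rw [Finset.card_erase_of_mem mA] at this
  omega

theorem oc_le (x : Perm α) : oc x ≤ Fintype.card α := by
  unfold oc OC
  exact (Finset.card_filter_le _ _).trans Finset.card_image_le

theorem odd_exists (n : ℕ) : ∀ x : Perm α, AllOdd x → Fintype.card α - oc x = n →
    ∃ w, Red w ∧ w.prod = x := by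
  induction n using Nat.strong_induction_on with
  | _ n ih =>
  intro x hx hn
  by_cases h1 : x = 1
  · subst h1
    exact ⟨[], ⟨by simp, by simp [oc_one]⟩, rfl⟩
  obtain ⟨p, hp⟩ : ∃ p, x p ≠ p := by
    by_contra! h2
    exact h1 (Perm.ext h2)
  have hp2 : x (x p) ≠ p := fun h => hp (odd2 (hx p) h)
  have hd : D3 p (x p) (x (x p)) := ⟨hp.symm, fun h => hp (x.injective h.symm), hp2.symm⟩
  obtain ⟨y, hy⟩ : ∃ y, y = (c3 p (x p) (x (x p)))⁻¹ * x := ⟨_, rfl⟩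
  have e : x = c3 p (x p) (x (x p)) * y := by rw [hy]; simp
  have yp : y p = p := by rw [inv_app e, c3i_1 hd]
  have yxp : y (x p) = x p := by rw [inv_app e, c3i_2 hd]
  have cp := cls_fixed yp
  have cxp := cls_fixed yxp
  have ho : oc y = oc x + 2 := by
    refine merge3_oc (a := x (x p)) (b := p) (c := x p) (by rw [← c3_rot hd.rot, ← c3_rot hd]; exact e) ?_ ?_ ?_ ?_ ?_
    · intro h
      have := mem_cls.2 h.symm
      rw [cp, Finset.mem_singleton] at this
      exact hp2 this
    · intro h
      have := mem_cls.2 h.symm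
      rw [cxp, Finset.mem_singleton] at this
      exact hd.2.1 this.symm
    · intro h
      have := mem_cls.2 h
      rw [cp, Finset.mem_singleton] at this
      exact hp this
    · rw [cp]; simp
    · rw [cxp]; simp
  have hao : AllOdd y := by
    refine AllOdd.tail (c3_three hd) (y := y) ?_ ?_
    · rw [← e]; exact hx
    · rw [← e]; exact ho
  have := oc_le y
  obtain ⟨w, hw, hwy⟩ := ih (Fintype.card α - oc y) (by omega) y hao rfl
  refine ⟨c3 p (x p) (x (x p)) :: w, Red.cons (c3_three hd) hw ?_, ?_⟩
  · rw [hwy, ← e]; exact ho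
  · rw [List.prod_cons, hwy, ← e]

end Join

section Filt
variable {G : Type*} [Group G]

theorem HE.comm1 (t : G) (l : List G) (h : ∀ u ∈ l, Commute t u) : HE (t :: l) (l ++ [t]) := by
  induction l with
  | nil => exact HE.refl _
  | cons u l ih =>
    have h1 := HE.move [] l t u
    have hc : u⁻¹ * t * u = t := by rw [mul_assoc, (h u List.mem_cons_self).eq]; simp
    rw [hc] at h1
    exact h1.trans ((ih (fun v hv => h v (List.mem_cons_of_mem _ hv))).cons u)

theorem HE.comm2 (l m : List G) (h : ∀ t ∈ l, ∀ u ∈ m, Commute t u) : HE (l ++ m) (m ++ l) := by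
  induction l with
  | nil => simpa using HE.refl _
  | cons t l ih =>
    have h1 := (ih (fun v hv => h v (List.mem_cons_of_mem _ hv))).cons t
    have h2 := (HE.comm1 t m (h t List.mem_cons_self)).append [] l
    simp only [List.nil_append, List.cons_append, List.append_assoc] at h1 h2 ⊢
    exact h1.trans h2

theorem HE.split (P : G → Bool) (l : List G)
    (h : ∀ t ∈ l, ∀ u ∈ l, P t = true → P u = false → Commute t u) :
    HE l (l.filter P ++ l.filter (fun t => !P t)) := by
  induction l with
  | nil => exact HE.refl _
  | cons t l ih =>
    have h1 := (ih (fun v hv u hu => h v (List.mem_cons_of_mem _ hv) u (List.mem_cons_of_mem _ hu))).cons t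
    cases hP : P t with
    | true => simpa [hP] using h1
    | false =>
      have h2 := (HE.comm1 t (l.filter P) (fun u hu => by
        rw [List.mem_filter] at hu
        exact (h u (List.mem_cons_of_mem _ hu.1) t List.mem_cons_self hu.2 hP).symm)).append []
          (l.filter (fun t => !P t))
      simp only [List.nil_append, List.cons_append, List.append_assoc] at h1 h2
      simpa [hP] using h1.trans h2

theorem HE.filter (M : G → Prop) (P : G → Bool)
    (hM : ∀ t u, M u → (M (u⁻¹ * t * u) ↔ M t))
    (hP : ∀ t u, M t → M u → P (u⁻¹ * t * u) = P t)
    (hC : ∀ t u, M t → M u → P t = true → P u = false → Commute t u)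
    {w v : List G} (h : HE w v) (hw : ∀ t ∈ w, M t) : HE (w.filter P) (v.filter P) := by
  refine (HE.lift (R := fun w v : List G => ((∀ t ∈ w, M t) ↔ (∀ t ∈ v, M t)) ∧ 
    ((∀ t ∈ w, M t) → HE (w.filter P) (v.filter P))) (fun _ => ⟨Iff.rfl, fun _ => HE.refl _⟩)
    (fun _ _ h => ⟨h.1.symm, fun h' => (h.2 (h.1.2 h')).symm⟩) (fun _ _ _ h h' =>
      ⟨h.1.trans h'.1, fun hh => (h.2 hh).trans (h'.2 (h.1.1 hh))⟩) ?_ h).2 hw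
  intro l₁ l₂ t u
  constructor
  · constructor
    · intro h s hs
      simp only [List.mem_append, List.mem_cons] at hs
      rcases hs with hs | rfl | rfl | hs
      · exact h s (by simp [hs])
      · exact h s (by simp)
      · exact (hM t u (h u (by simp))).2 (h t (by simp))
      · exact h s (by simp [hs])
    · intro h s hs
      simp only [List.mem_append, List.mem_cons] at hs
      rcases hs with hs | rfl | rfl | hs
      · exact h s (by simp [hs])
      · exact (hM s u (h u (by simp))).1 (h _ (by simp))
      · exact h s (by simp)
      · exact h s (by simp [hs])
  · intro h
    have mt := h t (by simp)
    have mu := h u (by simp)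
    have e := hP t u mt mu
    rw [List.filter_append, List.filter_append]
    cases h1 : P t <;> cases h2 : P u
    · simp only [List.filter_cons, h1, h2, e]; exact HE.refl _
    · simp only [List.filter_cons, h1, h2, e]; exact HE.refl _
    · have : u⁻¹ * t * u = t := by rw [mul_assoc, (hC t u mt mu h1 h2).eq]; simp
      simp only [this, List.filter_cons, h1, h2]; exact HE.refl _
    · simp only [List.filter_cons, h1, h2, e]; exact HE.move _ _ _ _

end Filt
end H19


namespace H19
set_option linter.unusedSectionVars false

section Restr
variable {α : Type*} [Fintype α] [DecidableEq α]

/-- `g` is supported in `S`. -/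
def Off (S : Finset α) (g : Perm α) : Prop := ∀ q, q ∉ S → g q = q

instance (S : Finset α) (g : Perm α) : Decidable (Off S g) := by unfold Off; infer_instance

/-- letters in `S` -/
def rs (S : Finset α) (w : List (Perm α)) : List (Perm α) := w.filter (fun t => decide (Off S t))
/-- letters not in `S` -/
def rn (S : Finset α) (w : List (Perm α)) : List (Perm α) := w.filter (fun t => !decide (Off S t))

/-- Three-cycles preserving `S`. -/
def Gd (S : Finset α) (t : Perm α) : Prop := Pres S t ∧ t.IsThreeCycle

theorem Pres.mul {S : Finset α} {g h : Perm α} (hg : Pres S g) (hh : Pres S h) : Pres S (g * h) :=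
  fun q => by rw [Perm.mul_apply, hg, hh]

theorem Pres.inv {S : Finset α} {g : Perm α} (hg : Pres S g) : Pres S g⁻¹ :=
  fun q => by rw [← hg (g⁻¹ q)]; simp

theorem Pres.conj {S : Finset α} {t u : Perm α} (hu : Pres S u) :
    Pres S (u⁻¹ * t * u) ↔ Pres S t := by
  constructor
  · intro h
    have := (hu.mul h).mul hu.inv
    simpa [mul_assoc] using this
  · intro h
    exact (hu.inv.mul h).mul hu

theorem Gd.conj {S : Finset α} {t u : Perm α} (hu : Gd S u) : Gd S (u⁻¹ * t * u) ↔ Gd S t := by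
  unfold Gd
  rw [hu.1.conj, three_conj]

theorem Off.conj {S : Finset α} {t u : Perm α} (hu : Pres S u) :
    Off S (u⁻¹ * t * u) ↔ Off S t := by
  constructor
  · intro h q hq
    have := h (u⁻¹ q) (by rw [hu.inv]; exact hq)
    simpa [Perm.inv_eq_iff_eq] using this
  · intro h q hq
    have := h (u q) (by rw [hu]; exact hq)
    simp [Perm.mul_apply, this]

theorem Gd.fix {S : Finset α} {t : Perm α} (ht : Gd S t) (h : ¬ Off S t) :
    ∀ q ∈ S, t q = q := by
  obtain ⟨a, b, c, hd, rfl⟩ := three_c3 ht.2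
  have h1 := ht.1 a
  have h2 := ht.1 b
  rw [c3_1 hd] at h1
  rw [c3_2 hd] at h2
  have ha : a ∉ S := by
    intro ha
    apply h
    intro q hq
    refine c3_ne ?_ ?_ ?_
    · rintro rfl; tauto
    · rintro rfl; tauto
    · rintro rfl; tauto
  intro q hq
  refine c3_ne ?_ ?_ ?_
  · rintro rfl; tauto
  · rintro rfl; tauto
  · rintro rfl; tauto

theorem Gd.comm {S : Finset α} {t u : Perm α} (hu : Gd S u) (h1 : Off S t)
    (h2 : ¬ Off S u) : Commute t u := by
  apply Perm.Disjoint.commute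
  intro q
  by_cases hq : q ∈ S
  · right; exact hu.fix h2 q hq
  · left; exact h1 q hq

theorem rs_split {S : Finset α} {w : List (Perm α)} (hw : ∀ t ∈ w, Gd S t) :
    HE w (rs S w ++ rn S w) ∧ HE w (rn S w ++ rs S w) := by
  have h1 : HE w (rs S w ++ rn S w) := HE.split (fun t => decide (Off S t)) w
    (fun t _ u hu h1 h2 => (hw u hu).comm (by simpa using h1) (by simpa using h2))
  refine ⟨h1, h1.trans (HE.comm2 _ _ ?_)⟩
  intro t ht u hu
  unfold rs at ht
  unfold rn at hu
  rw [List.mem_filter] at ht hu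
  exact (hw u hu.1).comm (by simpa using ht.2) (by simpa using hu.2)

theorem rs_HE {S : Finset α} {w v : List (Perm α)} (h : HE w v) (hw : ∀ t ∈ w, Gd S t) :
    HE (rs S w) (rs S v) := by
  refine HE.filter (Gd S) _ (fun t u hu => hu.conj) ?_ ?_ h hw
  · intro t u ht hu
    simp only [Off.conj hu.1]
  · intro t u ht hu h1 h2
    exact hu.comm (by simpa using h1) (by simpa using h2)

theorem rn_HE {S : Finset α} {w v : List (Perm α)} (h : HE w v) (hw : ∀ t ∈ w, Gd S t) :
    HE (rn S w) (rn S v) := by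
  refine HE.filter (Gd S) _ (fun t u hu => hu.conj) ?_ ?_ h hw
  · intro t u ht hu
    simp only [Off.conj hu.1]
  · intro t u ht hu h1 h2
    exact (ht.comm (by simpa using h2) (by simpa using h1)).symm

theorem rs_red {S : Finset α} {w : List (Perm α)} (hr : Red w) (hw : ∀ t ∈ w, Gd S t) :
    Red (rs S w) := Red.suffix ((rs_split hw).2.red.1 hr)

theorem prod_fix (w : List (Perm α)) (q : α) (h : ∀ t ∈ w, t q = q) : w.prod q = q := by
  induction w with
  | nil => rfl
  | cons t w ih =>
    rw [List.prod_cons, Perm.mul_apply, ih (fun s hs => h s (List.mem_cons_of_mem _ hs)),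
      h t List.mem_cons_self]

theorem rs_prod {S : Finset α} {w : List (Perm α)} (hw : ∀ t ∈ w, Gd S t) (q : α) :
    (rs S w).prod q = if q ∈ S then w.prod q else q := by
  split_ifs with hq
  · rw [(rs_split hw).1.prod, List.prod_append, Perm.mul_apply, prod_fix (rn S w)]
    intro t ht
    unfold rn at ht
    rw [List.mem_filter] at ht
    exact (hw t ht.1).fix (by simpa using ht.2) q hq
  · apply prod_fix
    intro t ht
    unfold rs at ht
    rw [List.mem_filter] at ht
    exact (by simpa using ht.2 : Off S t) q hq

/-- Data of a joiner. -/
structure JD (x : Perm α) (p b : α) (w : List (Perm α)) : Prop where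
  hp : Even (cls x p).card
  hb : Even (cls x b).card
  hpb : ¬ x.SameCycle p b
  e : x = c3 p (x p) b * w.prod
  red : Red w

variable {x : Perm α} {p b : α} {w : List (Perm α)}

theorem JD.d3 (h : JD x p b w) : D3 p (x p) b :=
  ⟨(even_ne h.hp).symm, fun h' => h.hpb (h' ▸ same_app _ p), ne_of_ns h.hpb⟩

theorem JD.off (h : JD x p b w) : Off (cls x p ∪ cls x b) (c3 p (x p) b) := by
  intro q hq
  simp only [Finset.mem_union, mem_cls, not_or] at hq
  refine c3_ne ?_ ?_ ?_
  · rintro rfl; exact hq.1 (SameCycle.refl _ _)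
  · rintro rfl; exact hq.1 (same_app _ _)
  · rintro rfl; exact hq.2 (SameCycle.refl _ _)

theorem JD.good (h : JD x p b w) : ∀ t ∈ w, Gd (cls x p ∪ cls x b) t := by
  obtain ⟨-, h1, h2, h3, -⟩ := joiner h.hp h.hb h.hpb h.e
  intro t ht
  refine ⟨fun q => ?_, h.red.1 t ht⟩
  rw [h2, h2, Finset.mem_union, Finset.mem_union, pres_odd w h.red b h3 t ht q,
    pres_odd w h.red p (by rw [h1]; simp) t ht q]

theorem JD.good_t (h : JD x p b w) : Gd (cls x p ∪ cls x b) (c3 p (x p) b) := by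
  refine ⟨fun q => ?_, c3_three h.d3⟩
  have h1 : p ∈ cls x p ∪ cls x b := by simp [self_mem_cls]
  have h2 : x p ∈ cls x p ∪ cls x b := Finset.mem_union_left _ (mem_cls.2 (same_app _ _))
  have h3 : b ∈ cls x p ∪ cls x b := by simp [self_mem_cls]
  by_cases hq : q ∈ cls x p ∪ cls x b
  · by_cases e1 : q = p
    · subst e1; rw [c3_1 h.d3]; tauto
    by_cases e2 : q = x p
    · subst e2; rw [c3_2 h.d3]; tauto
    by_cases e3 : q = b
    · subst e3; rw [c3_3]; tauto
    rw [c3_ne e1 e2 e3]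
  · rw [h.off q hq]

theorem JD.good' (h : JD x p b w) : ∀ t ∈ c3 p (x p) b :: w, Gd (cls x p ∪ cls x b) t := by
  intro t ht
  rcases List.mem_cons.1 ht with rfl | ht
  · exact h.good_t
  · exact h.good t ht

theorem JD.red' (h : JD x p b w) : Red (c3 p (x p) b :: w) := by
  refine Red.cons (c3_three h.d3) h.red ?_
  rw [← h.e]
  exact (joiner h.hp h.hb h.hpb h.e).1

theorem JD.odd (h : JD x p b w) : AllOdd (rs (cls x p ∪ cls x b) w).prod := by
  obtain ⟨-, h1, h2, h3, -⟩ := joiner h.hp h.hb h.hpb h.e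
  have hpr := rs_prod h.good
  intro q
  by_cases hq : q ∈ cls x p ∪ cls x b
  · have hq' := hq
    rw [h2, Finset.mem_union, mem_cls, mem_cls] at hq'
    have : cls (rs (cls x p ∪ cls x b) w).prod q = cls w.prod q := by
      apply cls_congr
      intro r hr
      rw [hpr, if_pos]
      rw [h2, Finset.mem_union, mem_cls, mem_cls]
      exact hq'.imp (fun h => h.trans hr) (fun h => h.trans hr)
    rw [this]
    rcases hq' with hq' | hq'
    · rw [← cls_eq_iff.2 hq', h1]; simp
    · rw [← cls_eq_iff.2 hq']; exact h3
  · rw [cls_fixed (by rw [hpr, if_neg hq])]; simp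

/-- Cancellation of the joiner. -/
theorem JD.cancel {w' : List (Perm α)} (h : JD x p b w) (h' : JD x p b w')
    (he : HE (c3 p (x p) b :: w) (c3 p (x p) b :: w')) : HE w w' := by
  have hn := rn_HE he h.good'
  have ho := h.off
  have e : w.prod = w'.prod := mul_left_cancel (h.e.symm.trans h'.e)
  unfold rn at hn
  rw [List.filter_cons_of_neg (by simpa using ho), List.filter_cons_of_neg (by simpa using ho)] at hn
  have hs : HE (rs (cls x p ∪ cls x b) w) (rs (cls x p ∪ cls x b) w') := by
    refine odd_trans _ _ _ rfl (rs_red h.red h.good) (rs_red h'.red h'.good) ?_ h.odd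
    ext q
    rw [rs_prod h.good, rs_prod h'.good, e]
  exact (rs_split h.good).1.trans ((hs.app2 hn).trans (rs_split h'.good).1.symm)

theorem JD.pres_of {w' : List (Perm α)} (h : JD x p b w) 
    (he : HE (c3 p (x p) b :: w) w') : ∀ t ∈ w', Pres (cls x p ∪ cls x b) t := by
  intro t ht
  have hc := he.closure
  have hind : ∀ t ∈ Subgroup.closure {t | t ∈ c3 p (x p) b :: w}, Pres (cls x p ∪ cls x b) t := by
    intro t ht
    induction ht using Subgroup.closure_induction with
    | mem y hy => exact (h.good' y hy).1
    | one => exact fun q => Iff.rfl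
    | mul a b _ _ h1 h2 => exact h1.mul h2
    | inv a _ h1 => exact h1.inv
  apply hind
  rw [hc]
  exact Subgroup.subset_closure ht

end Restr
end H19


namespace H19
set_option linter.unusedSectionVars false

section Cliff
variable {α : Type*} [Fintype α] [DecidableEq α] {R : Type*} [Ring R]

/-- Clifford relations -/
structure CR (e : α → R) : Prop where
  sq : ∀ i, e i * e i = 1
  anti : ∀ i j, i ≠ j → e i * e j = -(e j * e i)
  unit : IsUnit (2 : R)
  nt : Nontrivial R

/-- `G` implements `g` up to sign `s`. -/
def Imp (e : α → R) (G : R) (g : Perm α) (s : ℤ) : Prop := ∀ q, G * e q = s * (e (g q) * G)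

theorem Imp.mul {e : α → R} {G H : R} {g h : Perm α} {s s' : ℤ} (h1 : Imp e G g s)
    (h2 : Imp e H h s') : Imp e (G * H) (g * h) (s * s') := by
  intro q
  rw [mul_assoc, h2, ← mul_assoc, ← (Int.cast_commute s' G).eq, mul_assoc, ← mul_assoc G, h1,
    Perm.mul_apply, mul_comm s s', Int.cast_mul]
  simp only [mul_assoc]

theorem imp_v {e : α → R} (he : CR e) {a b : α} (hab : a ≠ b) :
    Imp e (e a - e b) (swap a b) (-1) := by
  intro q
  by_cases h1 : q = a
  · subst h1
    simp [mul_sub, sub_mul, he.sq]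
    abel
  by_cases h2 : q = b
  · subst h2
    simp [mul_sub, sub_mul, he.sq]
    abel
  rw [swap_apply_of_ne_of_ne h1 h2]
  simp only [mul_sub, sub_mul, he.anti q a h1, he.anti q b h2, Int.cast_neg, Int.cast_one]
  noncomm_ring

theorem unit_v {e : α → R} (he : CR e) {a b : α} (hab : a ≠ b) : IsUnit (e a - e b) := by
  have h2 : (e a - e b) * (e a - e b) = 2 := by
    simp only [mul_sub, sub_mul, he.sq, he.anti a b hab]
    rw [← one_add_one_eq_two]
    abel
  obtain ⟨u, hu⟩ := he.unit
  refine ⟨⟨e a - e b, (e a - e b) * ↑u⁻¹, ?_, ?_⟩, rfl⟩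
  · rw [← mul_assoc, h2, ← hu]; simp
  · have hc : Commute (↑u : R) (e a - e b) := by
      have := Nat.cast_commute 2 (e a - e b)
      rwa [Nat.cast_ofNat, ← hu] at this
    rw [mul_assoc, (hc.units_inv_left).eq, ← mul_assoc, h2, ← hu]; simp

open Classical in
/-- Clifford lift of a 3-cycle. -/
noncomputable def T (e : α → R) (t : Perm α) : R :=
  if t.IsThreeCycle then ((Fintype.card α : ℤ) - 2 : ℤ) - ∑ q, e q * e (t q) else 0

theorem T_c3 {e : α → R} (he : CR e) {a b c : α} (hd : D3 a b c) :
    T e (c3 a b c) = -((e a - e b) * (e b - e c)) := by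
  rw [T, if_pos (c3_three hd)]
  have h1 : ∑ q, (e q * e (c3 a b c q) - 1) = (e a * e b - 1) + (e b * e c - 1) + (e c * e a - 1) := by
    rw [← Finset.sum_subset (Finset.subset_univ {a, b, c})]
    · rw [Finset.sum_insert, Finset.sum_pair hd.2.1, c3_1 hd, c3_2 hd, c3_3, add_assoc]
      simp [hd.1, hd.2.2]
    · intro q _ hq
      simp only [Finset.mem_insert, Finset.mem_singleton, not_or] at hq
      rw [c3_ne hq.1 hq.2.1 hq.2.2, he.sq, sub_self]
  rw [Finset.sum_sub_distrib] at h1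
  simp only [Finset.sum_const, Finset.card_univ, nsmul_eq_mul, mul_one] at h1
  rw [sub_eq_iff_eq_add] at h1
  rw [h1, he.anti c a hd.2.2.symm]
  push_cast
  rw [← one_add_one_eq_two]
  simp only [mul_sub, sub_mul, he.sq]
  noncomm_ring

theorem imp_T {e : α → R} (he : CR e) {t : Perm α} (ht : t.IsThreeCycle) : Imp e (T e t) t 1 := by
  obtain ⟨a, b, c, hd, rfl⟩ := three_c3 ht
  rw [T_c3 he hd]
  intro q
  have := (imp_v he hd.1).mul (imp_v he hd.2.1) q
  rw [neg_mul, this]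
  simp [c3]

theorem unit_T {e : α → R} (he : CR e) {t : Perm α} (ht : t.IsThreeCycle) : IsUnit (T e t) := by
  obtain ⟨a, b, c, hd, rfl⟩ := three_c3 ht
  rw [T_c3 he hd]
  exact ((unit_v he hd.1).mul (unit_v he hd.2.1)).neg

theorem T_nat {e : α → R} {G : R} {g : Perm α} {s : ℤ} (h : Imp e G g s) (hs : s * s = 1)
    (t : Perm α) : G * T e t = T e (g * t * g⁻¹) * G := by
  have h3 : (g * t * g⁻¹).IsThreeCycle ↔ t.IsThreeCycle := by
    have := three_conj (t := t) (u := g⁻¹)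
    rwa [inv_inv] at this
  unfold T
  by_cases ht : t.IsThreeCycle
  · rw [if_pos ht, if_pos (h3.2 ht), mul_sub, sub_mul, (Int.cast_commute _ G).eq, Finset.mul_sum,
      Finset.sum_mul, ← Equiv.sum_comp g (fun q => e q * e ((g * t * g⁻¹) q) * G)]
    congr 1
    refine Finset.sum_congr rfl fun q _ => ?_
    have e1 : (g * t * g⁻¹) (g q) = g (t q) := by simp
    rw [e1, ← mul_assoc, h, mul_assoc (s : R), mul_assoc (e (g q)), h, ← mul_assoc (e (g q)),
      ← (Int.cast_commute s (e (g q))).eq, mul_assoc, ← mul_assoc, ← Int.cast_mul, hs]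
    simp [mul_assoc]
  · rw [if_neg ht, if_neg (fun h => ht (h3.1 h))]; simp

/-- Clifford lift of a word -/
noncomputable def PT (e : α → R) (w : List (Perm α)) : R := (w.map (T e)).prod

theorem PT_HE {e : α → R} (he : CR e) {w v : List (Perm α)} (h : HE w v) : PT e w = PT e v := by
  refine HE.lift (R := fun w v => PT e w = PT e v) (fun _ => rfl)
    (fun _ _ h => h.symm) (fun _ _ _ h h' => h.trans h') ?_ h
  intro l₁ l₂ t u
  have : T e t * T e u = T e u * T e (u⁻¹ * t * u) := by
    by_cases hu : u.IsThreeCycle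
    · rw [T_nat (imp_T he hu) (by simp)]
      simp [mul_assoc]
    · have : T e u = 0 := by unfold T; rw [if_neg hu]
      rw [this]; simp
  simp only [PT, List.map_append, List.map_cons, List.prod_append, List.prod_cons]
  rw [← mul_assoc (T e t), this, mul_assoc (T e u)]

theorem imp_PT {e : α → R} (he : CR e) (w : List (Perm α)) (hw : ∀ t ∈ w, t.IsThreeCycle) :
    Imp e (PT e w) w.prod 1 ∧ IsUnit (PT e w) := by
  induction w with
  | nil => exact ⟨by intro q; simp [PT], by simp [PT]⟩
  | cons t w ih =>
    have := ih (fun s hs => hw s (List.mem_cons_of_mem _ hs))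
    have ht := hw t List.mem_cons_self
    exact ⟨by simpa [PT] using (imp_T he ht).mul this.1, by
      simpa [PT] using (unit_T he ht).mul this.2⟩

theorem PT_nat {e : α → R} {G : R} {g : Perm α} {s : ℤ} (h : Imp e G g s) (hs : s * s = 1)
    (w : List (Perm α)) : G * PT e w = PT e (w.map (fun t => g * t * g⁻¹)) * G := by
  induction w with
  | nil => simp [PT]
  | cons t w ih =>
    simp only [PT, List.map_cons, List.prod_cons] at ih ⊢
    rw [← mul_assoc, T_nat h hs, mul_assoc (T e _), ih]
    exact (mul_assoc _ _ _).symm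

/-- Clifford lift of a cycle -/
def V (e : α → R) : List α → R
  | [] => 1
  | [_] => 1
  | a :: b :: l => (e a - e b) * V e (b :: l)

theorem imp_V {e : α → R} (he : CR e) (l : List α) (hl : l.Nodup) :
    Imp e (V e l) l.formPerm ((-1) ^ (l.length - 1)) ∧ IsUnit (V e l) := by
  induction l with
  | nil => exact ⟨by intro q; simp [V], by simp [V]⟩
  | cons a l ih =>
    cases l with
    | nil => exact ⟨by intro q; simp [V], by simp [V]⟩
    | cons b l =>
      have hab : a ≠ b := by
        rintro rfl; simp at hl
      obtain ⟨h1, h2⟩ := ih hl.of_cons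
      refine ⟨?_, (unit_v he hab).mul h2⟩
      have := (imp_v he hab).mul h1
      rw [List.formPerm_cons_cons]
      have hs : ((-1 : ℤ)) ^ ((a :: b :: l).length - 1) = -1 * (-1) ^ ((b :: l).length - 1) := by
        simp [pow_succ']
      rw [hs]
      exact this

theorem V_nat {e : α → R} {G : R} {g : Perm α} (h : Imp e G g 1) (l : List α) :
    G * V e l = V e (l.map g) * G := by
  induction l with
  | nil => simp [V]
  | cons a l ih =>
    cases l with
    | nil => simp [V]
    | cons b l =>
      have ha := h a
      have hb := h b
      simp only [Int.cast_one, one_mul] at ha hb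
      simp only [V, List.map_cons] at ih ⊢
      rw [← mul_assoc, mul_sub, ha, hb, ← sub_mul, mul_assoc, ih, mul_assoc]

theorem V_snoc (e : α → R) (a : α) (l : List α) (c : α) : 
    V e (a :: l ++ [c]) = V e (a :: l) * (e ((a :: l).getLast (by simp)) - e c) := by
  induction l generalizing a with
  | nil => simp [V]
  | cons b l ih =>
    have := ih b
    simp only [List.cons_append, V] at this ⊢
    rw [this, mul_assoc]
    simp

theorem V_rot {e : α → R} (he : CR e) (a : α) (l : List α) (hl : (a :: l).Nodup)
    (hn : Even (a :: l).length) : V e (l ++ [a]) = - V e (a :: l) := by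
  cases l with
  | nil => simp at hn
  | cons b l =>
    rw [V_snoc]
    have h1 := (imp_V he (b :: l) hl.of_cons).1
    have hs : ((-1 : ℤ) ^ ((b :: l).length - 1)) = 1 := by
      apply Even.neg_one_pow
      simp only [List.length_cons, Nat.even_iff] at hn ⊢
      omega
    rw [hs] at h1
    have ha := h1 a
    have hb := h1 ((b :: l).getLast (by simp))
    rw [List.formPerm_apply_getLast] at hb
    rw [List.formPerm_apply_of_notMem (by simpa using (List.nodup_cons.1 hl).1)] at ha
    simp only [Int.cast_one, one_mul] at ha hb
    rw [mul_sub, ha, hb, V]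
    noncomm_ring

theorem toList_rot (x : Perm α) (b : α) : (x.toList b).map x = (x.toList b).rotate 1 := by
  have h := toList_pow_apply_eq_rotate x b 1
  rw [← h, pow_one]
  unfold Equiv.Perm.toList
  rw [cycleOf_self_apply]
  generalize (x.cycleOf b).support.card = n
  clear h
  induction n generalizing b with
  | zero => simp
  | succ n ih => simp [ih]

theorem cls_card_cycleOf {x : Perm α} {b : α} (h : x b ≠ b) : cls x b = (x.cycleOf b).support := by
  ext q
  rw [mem_cls, mem_support_cycleOf_iff' h]

theorem cliff_aux {e : α → R} (he : CR e) {v : List (Perm α)} (hv : ∀ t ∈ v, t.IsThreeCycle)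
    {x : Perm α} {b : α}
    (h : HE v (v.map (fun t => x.cycleOf b * t * (x.cycleOf b)⁻¹))) (hb : Even (cls x b).card)
    (hx : ∀ r ∈ cls x b, v.prod r = x r) : False := by
  have hne := even_ne hb
  have hnd := nodup_toList x b
  obtain ⟨h1, h2⟩ := imp_V he (x.toList b) hnd
  rw [formPerm_toList] at h1
  have h3 := PT_nat h1 (by rw [← mul_pow]; simp) v
  rw [← PT_HE he h] at h3
  obtain ⟨h4, h5⟩ := imp_PT he v hv
  have h6 := V_nat h4 (x.toList b)
  have h7 : (x.toList b).map v.prod = (x.toList b).map x := by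
    apply List.map_congr_left
    intro r hr
    rw [mem_toList_iff] at hr
    exact hx r (mem_cls.2 hr.1)
  rw [h7, toList_rot] at h6
  have h8 : V e ((x.toList b).rotate 1) = - V e (x.toList b) := by
    have hlen : Even (x.toList b).length := by rw [length_toList, ← cls_card_cycleOf hne]; exact hb
    have hpos : (x.toList b) ≠ [] := by
      rw [Ne, toList_eq_nil_iff, mem_support, not_not]; exact hne
    generalize x.toList b = l at *
    cases l with
    | nil => exact absurd rfl hpos
    | cons a l =>
      rw [List.rotate_cons_succ, List.rotate_zero]
      exact V_rot he a l hnd hlen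
  rw [h8, ← h3] at h6
  rw [neg_mul] at h6
  have h9 := he.nt
  have h10 : 2 * (V e (x.toList b) * PT e v) = 0 := by
    rw [two_mul]; nth_rw 1 [h6]; simp
  have := (he.unit.mul (h2.mul h5))
  rw [h10] at this
  exact not_isUnit_zero this

end Cliff

section Cliff2
variable (α : Type) [Fintype α] [DecidableEq α]

theorem exists_CR : ∃ (R : Type) (_ : Ring R) (e : α → R), CR e := by
  let Q : QuadraticForm ℚ (α → ℚ) := QuadraticMap.weightedSumSquares ℚ (fun _ : α => (1 : ℚ))
  refine ⟨CliffordAlgebra Q, inferInstance, fun i => CliffordAlgebra.ι Q (Pi.single i 1), ?_, ?_, ?_, ?_⟩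
  · intro i
    rw [CliffordAlgebra.ι_sq_scalar]
    simp [Q, QuadraticMap.weightedSumSquares_apply, Pi.single_apply]
  · intro i j hij
    have := CliffordAlgebra.ι_mul_ι_add_swap (Q := Q) (Pi.single i 1) (Pi.single j 1)
    have h0 : QuadraticMap.polar Q (Pi.single i 1) (Pi.single j 1) = 0 := by
      simp [Q, QuadraticMap.polar, QuadraticMap.weightedSumSquares_apply, Pi.single_apply, mul_add,
        add_mul, Finset.sum_add_distrib, hij, hij.symm]
    rw [h0, map_zero] at this
    exact eq_neg_of_add_eq_zero_left this
  · have : (2 : CliffordAlgebra Q) = algebraMap ℚ _ 2 := (map_ofNat (algebraMap ℚ _) 2).symm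
    rw [this]
    exact (isUnit_iff_ne_zero.2 two_ne_zero).map (algebraMap ℚ (CliffordAlgebra Q))
  · infer_instance

end Cliff2
end H19


namespace H19
set_option linter.unusedSectionVars false

section Dist
variable {α : Type} [Fintype α] [DecidableEq α]

theorem cliff {v : List (Perm α)} (hv : ∀ t ∈ v, t.IsThreeCycle)
    {x : Perm α} {b : α}
    (h : HE v (v.map (fun t => x.cycleOf b * t * (x.cycleOf b)⁻¹))) (hb : Even (cls x b).card)
    (hx : ∀ r ∈ cls x b, v.prod r = x r) : False := by
  obtain ⟨R, _, e, he⟩ := exists_CR α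
  exact cliff_aux he hv h hb hx

theorem cls_conj (g x : Perm α) (p : α) : cls (g * x * g⁻¹) (g p) = (cls x p).map g.toEmbedding := by
  ext q
  rw [mem_cls, Finset.mem_map_equiv, mem_cls, sameCycle_conj]
  simp

theorem oc_conj (g x : Perm α) : oc (g * x * g⁻¹) = oc x := by
  have : OC (g * x * g⁻¹) = (OC x).map (Finset.mapEmbedding g.toEmbedding).toEmbedding := by
    ext C
    simp only [mem_OC, Finset.mem_map]
    constructor
    · rintro ⟨h, p, rfl⟩
      have := cls_conj g x (g⁻¹ p)
      rw [show g (g⁻¹ p) = p by simp] at this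
      refine ⟨cls x (g⁻¹ p), ⟨?_, _, rfl⟩, ?_⟩
      · rw [this, Finset.card_map] at h; exact h
      · rw [this]; rfl
    · rintro ⟨D, ⟨h, p, rfl⟩, rfl⟩
      have := cls_conj g x p
      refine ⟨?_, g p, ?_⟩
      · change Odd ((cls x p).map g.toEmbedding).card
        rw [Finset.card_map]; exact h
      · rw [this]; rfl
  rw [oc, this, Finset.card_map, oc]

theorem prod_conj (g : Perm α) (w : List (Perm α)) :
    (w.map (fun t => g * t * g⁻¹)).prod = g * w.prod * g⁻¹ := by
  induction w with
  | nil => simp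
  | cons t w ih => rw [List.map_cons, List.prod_cons, ih, List.prod_cons]; group

theorem Red.conj {w : List (Perm α)} (h : Red w) (g : Perm α) :
    Red (w.map (fun t => g * t * g⁻¹)) := by
  refine ⟨?_, ?_⟩
  · intro t ht
    obtain ⟨s, hs, rfl⟩ := List.mem_map.1 ht
    have := three_conj (t := s) (u := g⁻¹)
    rw [inv_inv] at this
    exact this.2 (h.1 s hs)
  · rw [prod_conj, oc_conj, List.length_map]
    exact h.2

variable {x : Perm α} {p b b' : α} {w w' : List (Perm α)}

theorem JD.same (h : JD x p b w) (h' : JD x p b' w')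
    (he : HE (c3 p (x p) b :: w) (c3 p (x p) b' :: w')) : x.SameCycle b b' := by
  have := h.pres_of he (c3 p (x p) b') List.mem_cons_self (x p)
  rw [c3_2 h'.d3] at this
  have := this.2 (Finset.mem_union_left _ (mem_cls.2 (same_app _ _)))
  rw [Finset.mem_union, mem_cls, mem_cls] at this
  exact this.resolve_left h'.hpb

theorem JD.eps (h : JD x p b w) (h' : JD x p (x b) w')
    (he : HE (c3 p (x p) b :: w) (c3 p (x p) (x b) :: w')) : False := by
  have hcl : cls x (x b) = cls x b := cls_eq_iff.2 (same_app x b).symm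
  have off := h.off
  have off' := h'.off
  have good' := h'.good
  have odd' := h'.odd
  rw [hcl] at off' good' odd'
  have hv := rs_HE he h.good'
  have hX := rs_prod h.good'
  rw [List.prod_cons, ← h.e] at hX
  have hSb : ∀ q, x.SameCycle b q → q ∈ cls x p ∪ cls x b := fun q hq =>
    Finset.mem_union_right _ (mem_cls.2 hq)
  generalize hS : cls x p ∪ cls x b = S at *
  have r1 : rs S (c3 p (x p) b :: w) = c3 p (x p) b :: rs S w := by
    unfold rs; rw [List.filter_cons_of_pos (by simpa using off)]
  have r2 : rs S (c3 p (x p) (x b) :: w') = c3 p (x p) (x b) :: rs S w' := by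
    unfold rs; rw [List.filter_cons_of_pos (by simpa using off')]
  have goodw : ∀ t ∈ w, Gd S t := hS ▸ h.good
  rw [r1] at hX
  rw [r1, r2] at hv
  obtain ⟨β, hβ⟩ : ∃ β, β = x.cycleOf b := ⟨_, rfl⟩
  have β1 : ∀ q, x.SameCycle b q → β q = x q := fun q hq => by
    rw [hβ, hq.cycleOf_apply]
  have β2 : ∀ q, ¬ x.SameCycle b q → β q = q := fun q hq => by
    rw [hβ, cycleOf_apply_of_not_sameCycle hq]
  have hpb : ¬ x.SameCycle b p := fun hh => h.hpb hh.symm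
  have conjt : β * c3 p (x p) b * β⁻¹ = c3 p (x p) (x b) := by
    rw [c3_conj, β2 p hpb, β2 (x p) (fun hh => hpb (sameCycle_apply_right.1 hh)),
      β1 b (SameCycle.refl _ _)]
  have hcomm : β * (c3 p (x p) b :: rs S w).prod = (c3 p (x p) b :: rs S w).prod * β := by
    ext q
    rw [Perm.mul_apply, Perm.mul_apply, hX, hX]
    by_cases hq : x.SameCycle b q
    · have hq2 : x.SameCycle b (x q) := sameCycle_apply_right.2 hq
      rw [if_pos (hSb q hq), β1 q hq, if_pos (hSb _ hq2), β1 _ hq2]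
    · rw [β2 q hq]
      apply β2
      split_ifs
      · exact fun hh => hq (sameCycle_apply_right.1 hh)
      · exact hq
  have hprod := hv.prod
  have hfin : HE (c3 p (x p) b :: rs S w)
      ((c3 p (x p) b :: rs S w).map (fun t => β * t * β⁻¹)) := by
    rw [List.map_cons, conjt]
    refine hv.trans (HE.cons ?_ _)
    refine odd_trans _ _ _ rfl (rs_red h'.red good') ((rs_red h.red goodw).conj β) ?_ odd'
    rw [prod_conj]
    apply mul_left_cancel (a := c3 p (x p) (x b))
    rw [← List.prod_cons, ← hprod, ← conjt]
    rw [← mul_inv_eq_iff_eq_mul.2 hcomm, List.prod_cons]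
    group
  rw [hβ] at hfin
  refine cliff ?_ hfin h.hb ?_
  · rw [← r1]
    intro t ht
    unfold rs at ht
    exact h.red'.1 t (List.mem_filter.1 ht).1
  · intro r hr
    rw [hX, if_pos (hSb r (mem_cls.1 hr))]

end Dist
end H19


namespace H19
set_option linter.unusedSectionVars false

section Count
variable {α : Type} [Fintype α] [DecidableEq α]

/-- Reduced words for `x`. -/
abbrev RW (x : Perm α) := {l : List (Perm α) // Red l ∧ l.prod = x}

/-- Hurwitz equivalence on reduced words. -/
def hset (x : Perm α) : Setoid (RW x) where
  r w w' := HE w.1 w'.1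
  iseqv := ⟨fun _ => HE.refl _, fun h => h.symm, fun h h' => h.trans h'⟩

/-- Hurwitz orbits of reduced words. -/
abbrev Orb (x : Perm α) := Quotient (hset x)

/-- prepending a letter. -/
def orbMap {x y : Perm α} (t : Perm α) (h : ∀ w : RW y, Red (t :: w.1) ∧ (t :: w.1).prod = x) :
    Orb y → Orb x :=
  Quotient.map' (s₁ := hset y) (s₂ := hset x) (fun w => ⟨t :: w.1, h w⟩)
    (fun _ _ hw => HE.cons hw t)

theorem count_prod (k : ℕ) : ∏ i ∈ Finset.range (k+1), (k+1+1+i)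
    = (2 * k + 1) * 2 * ∏ i ∈ Finset.range k, (k+1+i) := by
  have h1 := Finset.prod_range_succ' (fun i => k + 1 + i) (k+1)
  have h2 : ∏ i ∈ Finset.range (k+1+1), (k+1+i)
      = (∏ i ∈ Finset.range k, (k+1+i)) * (k+1+k) * (k+1+(k+1)) := by
    rw [Finset.prod_range_succ, Finset.prod_range_succ]
  rw [h2] at h1
  have h3 : ∏ i ∈ Finset.range (k+1), (k+1+1+i) = ∏ i ∈ Finset.range (k+1), (k+1+(i+1)) :=
    Finset.prod_congr rfl (fun i _ => by ring)
  rw [h3]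
  apply Nat.eq_of_mul_eq_mul_right (Nat.succ_pos k)
  simp only [add_zero] at h1
  rw [Nat.succ_eq_add_one, ← h1]
  ring

theorem count (k : ℕ) : ∀ x : Perm α, (EC x).card = 2 * k →
    Nat.card (Orb x) = ∏ i ∈ Finset.range k, (k+1+i) := by
  induction k with
  | zero =>
    intro x hx
    have hodd : AllOdd x := by
      intro p
      by_contra h
      rw [Nat.not_odd_iff_even] at h
      have : cls x p ∈ EC x := mem_EC.2 ⟨h, p, rfl⟩
      have h0 : EC x = ∅ := Finset.card_eq_zero.1 (by simpa using hx)
      rw [h0] at this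
      simp at this
    obtain ⟨w, hw, rfl⟩ := odd_exists _ x hodd rfl
    simp only [Finset.range_zero, Finset.prod_empty]
    rw [Nat.card_eq_one_iff_unique]
    refine ⟨⟨?_⟩, ⟨Quotient.mk (hset _) ⟨w, hw, rfl⟩⟩⟩
    intro a b
    induction a using Quotient.inductionOn with | _ a =>
    induction b using Quotient.inductionOn with | _ b =>
    apply Quotient.sound
    exact odd_trans _ a.1 b.1 rfl a.2.1 b.2.1 (a.2.2.trans b.2.2.symm) (by rw [a.2.2]; exact hodd)
  | succ k ih =>
    intro x hx
    obtain ⟨A, hA⟩ : (EC x).Nonempty := Finset.card_pos.1 (by omega)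
    obtain ⟨hp, p, rfl⟩ := mem_EC.1 hA
    have hr : ∀ B : {B // B ∈ (EC x).erase (cls x p)}, ∃ b, cls x b = B.1 := fun B =>
      (mem_EC.1 (Finset.mem_of_mem_erase B.2)).2
    choose r hr using hr
    let I := {B // B ∈ (EC x).erase (cls x p)} × Bool
    let β : I → α := fun i => if i.2 then x (r i.1) else r i.1
    have hβ : ∀ i : I, cls x (β i) = i.1.1 := by
      rintro ⟨B, ε⟩
      cases ε
      · simpa [β] using hr B
      · simp only [β, if_true]
        rw [← hr B]
        exact cls_eq_iff.2 (same_app _ _).symm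
    have hβe : ∀ i : I, Even (cls x (β i)).card := fun i => by
      rw [hβ]; exact (mem_EC.1 (Finset.mem_of_mem_erase i.1.2)).1
    have hβp : ∀ i : I, ¬ x.SameCycle p (β i) := fun i h => by
      have := cls_eq_iff.2 h
      rw [hβ] at this
      exact Finset.ne_of_mem_erase i.1.2 this.symm
    let y : I → Perm α := fun i => (c3 p (x p) (β i))⁻¹ * x
    have hy : ∀ i, x = c3 p (x p) (β i) * y i := fun i => by simp [y]
    have jd : ∀ i (w : RW (y i)), JD x p (β i) w.1 := fun i w =>
      ⟨hp, hβe i, hβp i, by rw [w.2.2]; exact hy i, w.2.1⟩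
    have hm : ∀ i (w : RW (y i)), Red (c3 p (x p) (β i) :: w.1) ∧
        (c3 p (x p) (β i) :: w.1).prod = x := fun i w =>
      ⟨(jd i w).red', by rw [List.prod_cons]; exact (jd i w).e.symm⟩
    have hcard : ∀ i, Nat.card (Orb (y i)) = ∏ i ∈ Finset.range k, (k+1+i) := fun i => by
      apply ih
      have := joiner_EC hp (hβe i) (hβp i) (hy i)
      omega
    have hpos : 0 < ∏ i ∈ Finset.range k, (k+1+i) := Finset.prod_pos (fun i _ => by omega)
    have hfin : ∀ i, Finite (Orb (y i)) := fun i =>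
      Nat.finite_of_card_ne_zero (by rw [hcard]; omega)
    let f : (Σ i : I, Orb (y i)) → Orb x := fun s => orbMap _ (hm s.1) s.2
    have hf : Function.Bijective f := by
      constructor
      · rintro ⟨i, q⟩ ⟨j, q'⟩ h
        induction q using Quotient.inductionOn with | _ w =>
        induction q' using Quotient.inductionOn with | _ w' =>
        have he : HE (c3 p (x p) (β i) :: w.1) (c3 p (x p) (β j) :: w'.1) :=
          Quotient.exact (s := hset x) h
        have hs := (jd i w).same (jd j w') he
        have hB : i.1 = j.1 := by
          apply Subtype.ext
          rw [← hβ i, ← hβ j]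
          exact cls_eq_iff.2 hs
        have hij : i = j := by
          obtain ⟨B, ε⟩ := i
          obtain ⟨B', ε'⟩ := j
          simp only at hB
          subst hB
          have j1 := jd _ w
          have j2 := jd _ w'
          clear_value y
          cases ε <;> cases ε'
          · rfl
          · simp only [β, if_true, Bool.false_eq_true, if_false] at j1 j2 he
            exact (j1.eps j2 he).elim
          · simp only [β, if_true, Bool.false_eq_true, if_false] at j1 j2 he
            exact (j2.eps j1 he.symm).elim
          · rfl
        subst hij
        have := (jd i w).cancel (jd i w') he
        congr 1
        exact Quotient.sound this
      · intro q
        induction q using Quotient.inductionOn with | _ v =>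
        obtain ⟨v, hv, hvx⟩ := v
        obtain ⟨b, hb1, hb2⟩ := even_start v hv p (by rw [hvx]; exact hp)
        have hne : v.prod p ≠ p := by rw [hvx]; exact even_ne hp
        obtain ⟨-, -, hbe, -⟩ := even_data hv hne hb1 hb2
        rw [hvx] at hbe hb1
        have hmem : cls x b ∈ (EC x).erase (cls x p) :=
          Finset.mem_erase.2 ⟨fun h => hb1 (cls_eq_iff.1 h).symm, mem_EC.2 ⟨hbe, b, rfl⟩⟩
        have hbr : v.prod.SameCycle b (r ⟨_, hmem⟩) := by
          rw [hvx]; exact cls_eq_iff.1 (hr ⟨_, hmem⟩).symm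
        have key : ∃ i : I, St v (c3 p (x p) (β i)) := by
          rcases even_norm hv hne (by rw [hvx]; exact hb1) hb2 hbr with h | h
          · rw [hvx] at h
            exact ⟨(⟨_, hmem⟩, false), by simpa [β] using h⟩
          · rw [hvx] at h
            exact ⟨(⟨_, hmem⟩, true), by simpa [β] using h⟩
        obtain ⟨i, hi⟩ := key
        obtain ⟨w', h1, h2, h3, -⟩ := hi.data hv
        refine ⟨⟨i, Quotient.mk (hset _) ⟨w', h2, ?_⟩⟩, ?_⟩
        · rw [hvx] at h3
          simp only [y]
          rw [eq_inv_mul_iff_mul_eq]; exact h3.symm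
        · apply Quotient.sound (s := hset x)
          exact h1.symm
    rw [← Nat.card_eq_of_bijective f hf, Nat.card_sigma, Finset.sum_congr rfl (fun i _ => hcard i),
      Finset.sum_const, Finset.card_univ, Fintype.card_prod, Fintype.card_coe, Fintype.card_bool,
      Finset.card_erase_of_mem hA, hx, smul_eq_mul, count_prod]
    rfl

theorem EC_cycleType (x : Perm α) :
    (x.cycleType.filter (fun n => Even n)).card = (EC x).card := by
  rw [cycleType_def, Multiset.filter_map, Multiset.card_map]
  have : EC x = (x.cycleFactorsFinset.filter (fun c => Even c.support.card)).image support := by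
    ext C
    rw [mem_EC, Finset.mem_image]
    constructor
    · rintro ⟨he, p, rfl⟩
      have hne := even_ne he
      refine ⟨x.cycleOf p, Finset.mem_filter.2 ⟨?_, ?_⟩, (cls_card_cycleOf hne).symm⟩
      · exact cycleOf_mem_cycleFactorsFinset_iff.2 (mem_support.2 hne)
      · rw [← cls_card_cycleOf hne]; exact he
    · rintro ⟨c, hc, rfl⟩
      obtain ⟨h1, h2⟩ := Finset.mem_filter.1 hc
      refine ⟨h2, ?_⟩
      obtain ⟨hcy, hag⟩ := mem_cycleFactorsFinset_iff.1 h1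
      obtain ⟨p, hp⟩ := hcy.nonempty_support
      have hce := cycle_is_cycleOf hp h1
      have hne : x p ≠ p := by rw [← hag p hp]; exact mem_support.1 hp
      exact ⟨p, by rw [cls_card_cycleOf hne, ← hce]⟩
  rw [this, Finset.card_image_of_injOn]
  · rfl
  · intro c hc d hd h
    have hc := (Finset.mem_filter.1 (Finset.mem_coe.1 hc)).1
    have hd := (Finset.mem_filter.1 (Finset.mem_coe.1 hd)).1
    obtain ⟨p, hp⟩ := (mem_cycleFactorsFinset_iff.1 hc).1.nonempty_support
    have hp' : p ∈ d.support := by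
      have h : c.support = d.support := h
      rwa [← h]
    rw [cycle_is_cycleOf hp hc, cycle_is_cycleOf hp' hd]

end Count

theorem final (N : ℕ) (x : Perm (Fin N)) (k : ℕ)
    (hk : (x.cycleType.filter (fun n => Even n)).card = 2*k) :
    Nat.card (Quot (fun w w' : {l : List (Perm (Fin N)) //
        l.length = lenT (threeCycles N) x ∧ (∀ t ∈ l, t.IsThreeCycle) ∧ l.prod = x} =>
        HurwitzMove w.1 w'.1))
      = ∏ i ∈ Finset.range k, (k+1+i) := by
  rw [EC_cycleType] at hk
  have hc := count k x hk
  have hpos : 0 < ∏ i ∈ Finset.range k, (k+1+i) := Finset.prod_pos (fun i _ => by omega)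
  have hne : Nonempty (Orb x) := by
    by_contra h
    rw [not_nonempty_iff] at h
    have := Nat.card_of_isEmpty (α := Orb x)
    omega
  obtain ⟨q⟩ := hne
  obtain ⟨v, hv, hvx⟩ := q.out
  have hlen : lenT (threeCycles N) x = v.length := by
    apply le_antisymm
    · exact Nat.sInf_le ⟨v, hv.1, hvx, rfl⟩
    · refine le_csInf ⟨v.length, v, hv.1, hvx, rfl⟩ ?_
      rintro n ⟨l, h1, h2, rfl⟩
      have a1 := lower l h1
      have a2 := hv.2
      rw [h2] at a1
      rw [hvx] at a2
      omega
  have hiff : ∀ l : List (Perm (Fin N)), (l.length = lenT (threeCycles N) x ∧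
      (∀ t ∈ l, t.IsThreeCycle) ∧ l.prod = x) ↔ (Red l ∧ l.prod = x) := by
    intro l
    have a2 := hv.2
    rw [hvx] at a2
    constructor
    · rintro ⟨h1, h2, h3⟩
      refine ⟨⟨h2, ?_⟩, h3⟩
      rw [h3, h1, hlen]; exact a2
    · rintro ⟨⟨h1, h2⟩, h3⟩
      refine ⟨?_, h1, h3⟩
      rw [h3] at h2
      omega
  rw [← hc]
  let P := {l : List (Perm (Fin N)) //
        l.length = lenT (threeCycles N) x ∧ (∀ t ∈ l, t.IsThreeCycle) ∧ l.prod = x}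
  have lft : ∀ w w' : List (Perm (Fin N)), HE w w' →
      ∀ (h : Red w ∧ w.prod = x) (h' : Red w' ∧ w'.prod = x),
      Relation.EqvGen (fun w w' : P => HurwitzMove w.1 w'.1) ⟨w, (hiff w).2 h⟩ ⟨w', (hiff w').2 h'⟩ := by
    intro w w' he
    induction he with
    | rel a b hab => intro h h'; exact Relation.EqvGen.rel _ _ hab
    | refl a => intro h h'; exact Relation.EqvGen.refl _
    | symm a b _ ih => intro h h'; exact Relation.EqvGen.symm _ _ (ih h' h)
    | trans a b c hab _ ih1 ih2 =>
      intro h h'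
      have hb : Red b ∧ b.prod = x := by
        have hab : HE a b := hab
        exact ⟨hab.red.1 h.1, hab.prod.symm.trans h.2⟩
      exact Relation.EqvGen.trans _ _ _ (ih1 h hb) (ih2 hb h')
  let g : Quot (fun w w' : P => HurwitzMove w.1 w'.1) → Orb x :=
    Quot.lift (fun w => Quotient.mk (hset x) ⟨w.1, (hiff _).1 w.2⟩) (fun a b hab =>
      Quotient.sound (s := hset x) (show HE a.1 b.1 from Relation.EqvGen.rel _ _ hab))
  refine Nat.card_eq_of_bijective g ⟨?_, ?_⟩
  · intro a b h
    induction a using Quot.inductionOn with | _ a =>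
    induction b using Quot.inductionOn with | _ b =>
    have he : HE a.1 b.1 := Quotient.exact (s := hset x) h
    exact Quot.eqvGen_sound (lft a.1 b.1 he ((hiff _).1 a.2) ((hiff _).1 b.2))
  · intro q
    induction q using Quotient.inductionOn with | _ a =>
    exact ⟨Quot.mk _ ⟨a.1, (hiff _).2 a.2⟩, rfl⟩

theorem final2 {N : ℕ} (x : Perm (Fin N)) (k : ℕ)
    (hk : (x.cycleType.filter (fun n => Even n)).card = 2*k) :
    ∏ i ∈ Finset.range k, (k+1+i) = 1 ↔ ∀ c ∈ x.cycleType, Odd c := by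
  have h1 : ∏ i ∈ Finset.range k, (k+1+i) = 1 ↔ k = 0 := by
    constructor
    · intro h
      by_contra hk
      have := (Finset.prod_eq_one_iff.1 h) 0 (Finset.mem_range.2 (by omega))
      omega
    · rintro rfl; simp
  rw [h1]
  have h2 : k = 0 ↔ (x.cycleType.filter (fun n => Even n)).card = 0 := by omega
  rw [h2, Multiset.card_eq_zero, Multiset.filter_eq_nil]
  simp only [Nat.not_even_iff_odd]

end H19

theorem stmt19 (N : ℕ) (hN : 3 ≤ N) (x : Perm (Fin N))
    (hx : x ∈ alternatingGroup (Fin N)) (k : ℕ)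
    (hk : (x.cycleType.filter (fun n => Even n)).card = 2*k) :
    Nat.card (Quot (fun w w' : {l : List (Perm (Fin N)) //
        l.length = lenT (threeCycles N) x ∧ (∀ t ∈ l, t.IsThreeCycle) ∧ l.prod = x} =>
        HurwitzMove w.1 w'.1))
      = ∏ i ∈ Finset.range k, (k+1+i)
    ∧ (Nat.card (Quot (fun w w' : {l : List (Perm (Fin N)) //
        l.length = lenT (threeCycles N) x ∧ (∀ t ∈ l, t.IsThreeCycle) ∧ l.prod = x} =>
        HurwitzMove w.1 w'.1)) = 1 ↔ ∀ c ∈ x.cycleType, Odd c) := by 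
  rw [H19.final N x k hk]
  exact ⟨rfl, H19.final2 x k hk⟩
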